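/- arXiv:1603.03134 — 2 statements merged into one kernel-verified Lean document; each statement's English description precedes it below -/
import Mathlib

section
/- Let \(N,d\) be positive integers with \(\gcd(d,N)=1\), and let \(u,z,v\in\mathbb{C}\) with \(\mathrm{Re}\,u>1/2\), \(\mathrm{Re}\,z>1\) and \(\mathrm{Re}\,v=0\). Then (all series converging absolutely) \(\sum_{\substack{q\geq 1\\ N\mid q}}\frac{1}{q^{2u}}\sum_{\substack{m,n\geq 1,\ \gcd(n,q)=1\\ mn\equiv d\ (\mathrm{mod}\ q)}}\frac{(m/n)^{-v}}{(mn)^{z}} \;=\; \frac{1}{N^{2u}}\sum_{r\mid d}\frac{\mu(d/r)}{(d/r)^{z+2u-v}}\Bigl(\zeta(2u)\,\frac{\tau_v(r)}{r^{z}}\;+\;\sum_{\substack{a\in\mathbb{Z},\ a\neq 0\\ a\geq (1-r)/N}}\frac{\tau_v(r+aN)\,\tau_u(|a|)}{(r+aN)^{z}\,|a|^{u}}\Bigr)\). -/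
/-- `τ_s(n) = ∑_{n₁ n₂ = n} (n₁/n₂)^s = n^{-s} σ_{2s}(n)` for complex `s` and `n ≥ 1`. -/
noncomputable def tauC (s : ℂ) (n : ℕ) : ℂ :=
  ∑ d ∈ n.divisors, (((d : ℂ)) / ((n / d : ℕ) : ℂ)) ^ s

/-- The summand of the left-hand side, indexed over triples `(q,m,n)` of positive integers
(via `+1` shifts): `q^{-2u} (m/n)^{-v} (mn)^{-z}` restricted to `N ∣ q`, `gcd(n,q) = 1` and
`mn ≡ d (mod q)`. -/
noncomputable def lhsTerm (N d : ℕ) (u z v : ℂ) (x : ℕ × ℕ × ℕ) : ℂ :=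
  if N ∣ (x.1 + 1) ∧ Nat.gcd (x.2.2 + 1) (x.1 + 1) = 1 ∧
      ((x.2.1 + 1) * (x.2.2 + 1)) % (x.1 + 1) = d % (x.1 + 1) then
    (1 / ((x.1 + 1 : ℕ) : ℂ) ^ (2 * u)) *
      ((((x.2.1 + 1 : ℕ) : ℂ)) / ((x.2.2 + 1 : ℕ) : ℂ)) ^ (-v) /
      (((x.2.1 + 1) * (x.2.2 + 1) : ℕ) : ℂ) ^ z
  else 0

/-- The summand of the inner right-hand sum, indexed over nonzero integers `a ≥ (1-r)/N`:
`τ_v(r+aN) τ_u(|a|) / ((r+aN)^z |a|^u)`. -/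
noncomputable def aTerm (N : ℕ) (u z v : ℂ) (r : ℕ) (a : ℤ) : ℂ :=
  if a ≠ 0 ∧ (1 : ℤ) - (r : ℤ) ≤ a * (N : ℤ) then
    tauC v ((r : ℤ) + a * (N : ℤ)).toNat * tauC u a.natAbs /
      ((((r : ℤ) + a * (N : ℤ) : ℤ) : ℂ)) ^ z / ((a.natAbs : ℂ)) ^ u
  else 0

/-!
Every condition `q ∣ m n - d` is treated as a sum over the quotient. Write `q = N k`. Since
`m n ≡ d (mod N)` and `(d, N) = 1` force `(n, N) = 1`, the coprimality condition is `(n, k) = 1`; it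
is removed by Möbius inversion over `e ∣ (n, k)`, and such an `e` divides `d` because
`m n ≡ d (mod N k)`. Replacing `(k, m, n)` by `(e k, m, e n)` turns the congruence into
`m n ≡ r (mod N k)` with `r = d / e`. Finally `m n = r + a N` with `k ∣ a`: for fixed `a` the sum
over `(m, n)` gives `τ_v(r + a N)`, and the sum over `k ∣ a` gives `τ_u(|a|)` for `a ≠ 0` and
`ζ(2u)` for `a = 0`.
-/

open Complex
open scoped ArithmeticFunction.Moebius

section Sieve

theorem sum_moebius_filter_dvd {n d : ℕ} (hd : d ≠ 0) (hn : n ∣ d) :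
    ∑ e ∈ d.divisors with e ∣ n, μ e = if n = 1 then 1 else 0 := by
  rw [Nat.divisors_filter_dvd_of_dvd hd hn, ← ArithmeticFunction.coe_mul_zeta_apply,
    ArithmeticFunction.moebius_mul_coe_zeta, ArithmeticFunction.one_apply]

variable {ι R : Type*}

theorem indicator_eq_one_eq_sum_moebius_mul_indicator_dvd [Ring R] {S : Set ι} {g : ι → ℕ}
    {d : ℕ} (hd : d ≠ 0) (hg : ∀ x ∈ S, g x ∣ d) (f : ι → R) (x : ι) :
    {x ∈ S | g x = 1}.indicator f x =
      ∑ e ∈ d.divisors, (μ e : R) * {x ∈ S | e ∣ g x}.indicator f x := by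
  classical
  by_cases hx : x ∈ S
  · have hμ := congrArg (fun k : ℤ => (k : R) * f x) (sum_moebius_filter_dvd hd (hg x hx))
    simpa [Set.indicator_apply, hx, Finset.sum_filter, Finset.sum_mul, ite_mul] using hμ.symm
  · simp [hx]

variable [NormedRing R] [CompleteSpace R]

theorem tsum_eq_one_eq_sum_moebius_mul_tsum_dvd {S : Set ι} {g : ι → ℕ} {d : ℕ} (hd : d ≠ 0)
    (hg : ∀ x ∈ S, g x ∣ d) {f : ι → R} (hf : Summable f) :
    ∑' x : {x ∈ S | g x = 1}, f x =
      ∑ e ∈ d.divisors, (μ e : R) * ∑' x : {x ∈ S | e ∣ g x}, f x := by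
  have hsum (e : ℕ) : Summable ({x ∈ S | e ∣ g x}.indicator f) := hf.indicator _
  calc ∑' x : {x ∈ S | g x = 1}, f x
      = ∑' x, ∑ e ∈ d.divisors, (μ e : R) * {x ∈ S | e ∣ g x}.indicator f x := by
        rw [tsum_subtype _ f]
        exact tsum_congr (indicator_eq_one_eq_sum_moebius_mul_indicator_dvd hd hg f)
    _ = ∑ e ∈ d.divisors, ∑' x, (μ e : R) * {x ∈ S | e ∣ g x}.indicator f x :=
        Summable.tsum_finsetSum fun e _ => (hsum e).mul_left _
    _ = ∑ e ∈ d.divisors, (μ e : R) * ∑' x : {x ∈ S | e ∣ g x}, f x := by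
        refine Finset.sum_congr rfl fun e _ => ?_
        rw [(hsum e).tsum_mul_left, tsum_subtype _ f]

theorem tsum_subtype_mul_tsum_subtype_of_summable_norm {κ : Type*} {f : ι → R} {g : κ → R}
    (hf : Summable fun i => ‖f i‖) (hg : Summable fun j => ‖g j‖) (A : Set ι) (B : Set κ) :
    (∑' i : A, f i) * ∑' j : B, g j = ∑' x : ↥(A ×ˢ B), f x.1.1 * g x.1.2 :=
  (tsum_mul_tsum_of_summable_norm (hf.subtype A) (hg.subtype B)).trans
    ((Equiv.Set.prod A B).tsum_eq fun x => f x.1 * g x.2).symm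

theorem hasSum_tsum_dvd_mul_tsum_eq {N : ℤ} (hN : N ≠ 0) (r : ℤ) (ψ : ι → ℤ) {f : ℕ → R}
    {g : ι → R} (hf : Summable fun k => ‖f k‖) (hg : Summable fun y => ‖g y‖) :
    HasSum (fun a : ℤ => (∑' k : {k : ℕ | (k : ℤ) ∣ a}, f k) * ∑' y : {y | ψ y = r + a * N}, g y)
      (∑' x : {x : ℕ × ι | N * x.1 ∣ ψ x.2 - r}, f x.1.1 * g x.1.2) := by
  set T := {x : ℕ × ι | N * x.1 ∣ ψ x.2 - r}
  let F (x : ℕ × ι) : R := f x.1 * g x.2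
  let quot (x : ℕ × ι) : ℤ := (ψ x.2 - r) / N
  have fiber (a : ℤ) :
      quot ⁻¹' {a} ∩ T = {k : ℕ | (k : ℤ) ∣ a} ×ˢ {y | ψ y = r + a * N} := by
    ext ⟨k, y⟩
    change (ψ y - r) / N = a ∧ N * k ∣ ψ y - r ↔ (k : ℤ) ∣ a ∧ ψ y = r + a * N
    constructor
    · rintro ⟨rfl, c, hc⟩
      rw [hc, mul_assoc, Int.mul_ediv_cancel_left _ hN]
      exact ⟨dvd_mul_right _ _, by linear_combination hc⟩
    · rintro ⟨hk, hy⟩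
      have hdiff : ψ y - r = N * a := by linear_combination hy
      rw [hdiff, Int.mul_ediv_cancel_left _ hN]
      exact ⟨rfl, mul_dvd_mul_left N hk⟩
  have hF : Summable (T.indicator F) := (summable_mul_of_summable_norm hf hg).indicator T
  have tsum_fiber (a : ℤ) : ∑' x : quot ⁻¹' {a}, T.indicator F x =
      (∑' k : {k : ℕ | (k : ℤ) ∣ a}, f k) * ∑' y : {y | ψ y = r + a * N}, g y := by
    rw [tsum_subtype_mul_tsum_subtype_of_summable_norm hf hg, tsum_subtype _ F,
      tsum_subtype _ (T.indicator F), Set.indicator_indicator, fiber]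
  rw [tsum_subtype T F]
  simpa only [tsum_fiber] using hF.hasSum.tsum_fiberwise quot

end Sieve

section DirichletMonomial

theorem natCast_div_natCast_cpow (m n : ℕ) (s : ℂ) :
    ((m : ℂ) / n) ^ s = (m : ℂ) ^ s / (n : ℂ) ^ s := by
  simpa using div_cpow_ofReal_nonneg m.cast_nonneg n.cast_nonneg s

theorem div_cpow_div_mul_cpow {m n : ℕ} (hm : m ≠ 0) (hn : n ≠ 0) (v z : ℂ) :
    ((m : ℂ) / n) ^ v / ((m * n : ℕ) : ℂ) ^ z = (m : ℂ) ^ (-(z - v)) * (n : ℂ) ^ (-(z + v)) := by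
  rw [natCast_div_natCast_cpow, Nat.cast_mul, natCast_mul_natCast_cpow, neg_sub, neg_add',
    cpow_sub _ _ (Nat.cast_ne_zero.2 hm), cpow_sub _ _ (Nat.cast_ne_zero.2 hn), cpow_neg]
  ring

theorem summable_norm_natCast_cpow_neg {s : ℂ} (hs : 1 < s.re) :
    Summable fun n : ℕ => ‖(n : ℂ) ^ (-s)‖ := by
  simpa only [one_div, ← cpow_neg] using (summable_one_div_nat_cpow.2 hs).norm

theorem summable_norm_cpow_neg_mul_cpow_neg {α β : ℂ} (hα : 1 < α.re) (hβ : 1 < β.re) :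
    Summable fun y : ℕ × ℕ => ‖(y.1 : ℂ) ^ (-α) * (y.2 : ℂ) ^ (-β)‖ :=
  Summable.mul_norm (f := fun m : ℕ => (m : ℂ) ^ (-α)) (g := fun n : ℕ => (n : ℂ) ^ (-β))
    (summable_norm_natCast_cpow_neg hα) (summable_norm_natCast_cpow_neg hβ)

/-- The monomial `k^{-s} m^{-α} n^{-β}` at a triple `(k, m, n)`. The triples range over all of `ℕ`:
for nonzero exponents the monomial vanishes as soon as one coordinate is `0`. -/
noncomputable def dirichletMonomial (s α β : ℂ) (x : ℕ × ℕ × ℕ) : ℂ :=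
  (x.1 : ℂ) ^ (-s) * ((x.2.1 : ℂ) ^ (-α) * (x.2.2 : ℂ) ^ (-β))

variable {s α β : ℂ}

theorem summable_dirichletMonomial (hs : 1 < s.re) (hα : 1 < α.re) (hβ : 1 < β.re) :
    Summable (dirichletMonomial s α β) :=
  summable_mul_of_summable_norm (f := fun k : ℕ => (k : ℂ) ^ (-s))
    (g := fun y : ℕ × ℕ => (y.1 : ℂ) ^ (-α) * (y.2 : ℂ) ^ (-β))
    (summable_norm_natCast_cpow_neg hs)
    (summable_norm_cpow_neg_mul_cpow_neg hα hβ)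

theorem support_dirichletMonomial_subset (hs : s ≠ 0) (hα : α ≠ 0) (hβ : β ≠ 0) :
    Function.support (dirichletMonomial s α β) ⊆
      Set.range fun x : ℕ × ℕ × ℕ => (x.1 + 1, x.2.1 + 1, x.2.2 + 1) := by
  rintro ⟨_ | k, _ | m, _ | n⟩ hx
  case succ.succ.succ => exact ⟨(k, m, n), rfl⟩
  all_goals simp [dirichletMonomial, hs, hα, hβ] at hx

theorem dirichletMonomial_mul (s α β : ℂ) (a b c k m n : ℕ) :
    dirichletMonomial s α β (a * k, b * m, c * n) =
      dirichletMonomial s α β (a, b, c) * dirichletMonomial s α β (k, m, n) := by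
  simp only [dirichletMonomial, Nat.cast_mul, natCast_mul_natCast_cpow]
  ring

end DirichletMonomial

section DivisorSums

theorem tauC_div_cpow (v z : ℂ) (n : ℕ) :
    tauC v n / (n : ℂ) ^ z =
      ∑ p ∈ n.divisorsAntidiagonal, (p.1 : ℂ) ^ (-(z + v)) * (p.2 : ℂ) ^ (-(z - v)) := by
  rw [tauC, ← Nat.sum_divisorsAntidiagonal (f := fun a b : ℕ => ((a : ℂ) / b) ^ v),
    Nat.sum_divisorsAntidiagonal (f := fun a b : ℕ => (a : ℂ) ^ (-(z + v)) * (b : ℂ) ^ (-(z - v))),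
    ← Nat.sum_divisorsAntidiagonal'
      (f := fun a b : ℕ => (b : ℂ) ^ (-(z + v)) * (a : ℂ) ^ (-(z - v))), Finset.sum_div]
  refine Finset.sum_congr rfl fun p hp => ?_
  have hp0 := Nat.ne_zero_of_mem_divisorsAntidiagonal hp
  rw [← (Nat.mem_divisorsAntidiagonal.1 hp).1, div_cpow_div_mul_cpow hp0.1 hp0.2, mul_comm]

theorem tauC_self_div_cpow (u : ℂ) (n : ℕ) :
    tauC u n / (n : ℂ) ^ u = ∑ k ∈ n.divisors, (k : ℂ) ^ (-(2 * u)) := by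
  rw [tauC_div_cpow, ← Nat.sum_divisorsAntidiagonal (f := fun k _ : ℕ => (k : ℂ) ^ (-(2 * u)))]
  simp [two_mul]

theorem tsum_dvd_zero_cpow_neg {s : ℂ} (hs : 1 < s.re) :
    ∑' k : {k : ℕ | (k : ℤ) ∣ 0}, (k : ℂ) ^ (-s) = riemannZeta s := by
  rw [tsum_subtype _ fun k : ℕ => (k : ℂ) ^ (-s), zeta_eq_tsum_one_div_nat_cpow hs]
  simp [cpow_neg]

theorem tsum_dvd_cpow_neg {a : ℤ} (ha : a ≠ 0) (u : ℂ) :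
    ∑' k : {k : ℕ | (k : ℤ) ∣ a}, (k : ℂ) ^ (-(2 * u)) =
      tauC u a.natAbs / (a.natAbs : ℂ) ^ u := by
  have hset : {k : ℕ | (k : ℤ) ∣ a} = a.natAbs.divisors := by
    ext k
    simp [Int.natCast_dvd, ha]
  rw [hset, tauC_self_div_cpow]
  exact a.natAbs.divisors.tsum_subtype fun k : ℕ => (k : ℂ) ^ (-(2 * u))

theorem tsum_mul_eq_natCast {n : ℕ} (hn : n ≠ 0) (v z : ℂ) :
    ∑' y : {y : ℕ × ℕ | (y.1 : ℤ) * y.2 = n},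
      (y.1.1 : ℂ) ^ (-(z + v)) * (y.1.2 : ℂ) ^ (-(z - v)) = tauC v n / (n : ℂ) ^ z := by
  have hset : {y : ℕ × ℕ | (y.1 : ℤ) * y.2 = n} = n.divisorsAntidiagonal := by
    ext y
    simp only [Finset.mem_coe, Nat.mem_divisorsAntidiagonal, Set.mem_ofPred_eq]
    exact_mod_cast (and_iff_left hn).symm
  rw [hset, tauC_div_cpow]
  exact n.divisorsAntidiagonal.tsum_subtype
    fun y : ℕ × ℕ => (y.1 : ℂ) ^ (-(z + v)) * (y.2 : ℂ) ^ (-(z - v))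

theorem tsum_mul_eq_of_nonpos {l : ℤ} (hl : l ≤ 0) {α β : ℂ} (hα : α ≠ 0) (hβ : β ≠ 0) :
    ∑' y : {y : ℕ × ℕ | (y.1 : ℤ) * y.2 = l}, (y.1.1 : ℂ) ^ (-α) * (y.1.2 : ℂ) ^ (-β) = 0 := by
  refine (tsum_congr ?_).trans tsum_zero
  rintro ⟨⟨m, n⟩, hmn : (m : ℤ) * n = l⟩
  have hzero : m * n = 0 := by exact_mod_cast (hmn.trans_le hl).antisymm (by positivity)
  rcases mul_eq_zero.1 hzero with rfl | rfl <;> simp [hα, hβ]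

end DivisorSums

section CongruenceTriples

/-- The triples `(k, m, n)` with `m n ≡ r (mod N k)`. -/
def congruenceTriples (N r : ℕ) : Set (ℕ × ℕ × ℕ) :=
  {x | x.2.1 * x.2.2 ≡ r [MOD N * x.1]}

/-- The triples `(q, m, n)` over which the left-hand side runs: `N ∣ q`, `(n, q) = 1` and
`m n ≡ d (mod q)`. -/
def coprimeCongruenceTriples (N d : ℕ) : Set (ℕ × ℕ × ℕ) :=
  {x | N ∣ x.1 ∧ x.2.2.gcd x.1 = 1 ∧ x.2.1 * x.2.2 ≡ d [MOD x.1]}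

theorem congruenceTriples_eq_setOf_dvd (N r : ℕ) :
    congruenceTriples N r = {x | (N : ℤ) * x.1 ∣ (x.2.1 : ℤ) * x.2.2 - r} := by
  ext x
  simp [congruenceTriples, Nat.modEq_iff_dvd, dvd_sub_comm]

theorem gcd_dvd_of_mem_congruenceTriples {N r : ℕ} {x : ℕ × ℕ × ℕ}
    (hx : x ∈ congruenceTriples N r) : x.2.2.gcd x.1 ∣ r :=
  (Nat.ModEq.dvd_iff hx ((Nat.gcd_dvd_right _ _).mul_left N)).1
    ((Nat.gcd_dvd_left _ _).mul_left _)

theorem image_scale_congruenceTriples (N r : ℕ) {e : ℕ} (he : e ≠ 0) :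
    (fun x : ℕ × ℕ × ℕ => (e * x.1, x.2.1, e * x.2.2)) '' congruenceTriples N r =
      {x ∈ congruenceTriples N (e * r) | e ∣ x.2.2.gcd x.1} := by
  have scale (k m n : ℕ) :
      (e * k, m, e * n) ∈ congruenceTriples N (e * r) ↔ (k, m, n) ∈ congruenceTriples N r := by
    simp only [congruenceTriples, Set.mem_ofPred_eq]
    rw [mul_left_comm m, mul_left_comm N, Nat.ModEq.mul_left_cancel_iff' he]
  ext ⟨q, m, l⟩
  constructor
  · rintro ⟨⟨k, m, n⟩, hx, ⟨⟩⟩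
    exact ⟨(scale k m n).2 hx, Nat.dvd_gcd (dvd_mul_right _ _) (dvd_mul_right _ _)⟩
  · rintro ⟨hx, he_gcd⟩
    obtain ⟨⟨n, rfl⟩, ⟨k, rfl⟩⟩ := Nat.dvd_gcd_iff.1 he_gcd
    exact ⟨(k, m, n), (scale k m n).1 hx, rfl⟩

theorem coprime_mul_iff_of_mem_congruenceTriples {N d : ℕ} (hdN : d.Coprime N) {x : ℕ × ℕ × ℕ}
    (hx : x ∈ congruenceTriples N d) : x.2.2.Coprime (N * x.1) ↔ x.2.2.Coprime x.1 := by
  have hmod : x.2.1 * x.2.2 ≡ d [MOD N] := Nat.ModEq.of_mul_right _ hx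
  have hN : x.2.2.Coprime N := Nat.Coprime.coprime_mul_left (k := x.2.1) (hmod.gcd_eq.trans hdN)
  rw [Nat.coprime_mul_iff_right, and_iff_right hN]

theorem image_mul_left_coprime_congruenceTriples {N d : ℕ} (hdN : d.Coprime N) :
    (fun x : ℕ × ℕ × ℕ => (N * x.1, x.2)) '' {x ∈ congruenceTriples N d | x.2.2.gcd x.1 = 1} =
      coprimeCongruenceTriples N d := by
  ext ⟨q, m, n⟩
  constructor
  · rintro ⟨⟨k, m, n⟩, ⟨hx, hcop⟩, ⟨⟩⟩
    exact ⟨dvd_mul_right _ _, (coprime_mul_iff_of_mem_congruenceTriples hdN hx).2 hcop, hx⟩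
  · rintro ⟨⟨k, rfl⟩, hcop, hx⟩
    exact ⟨(k, m, n), ⟨hx, (coprime_mul_iff_of_mem_congruenceTriples hdN hx).1 hcop⟩, rfl⟩

variable {s α β : ℂ}

theorem tsum_dvd_gcd_congruenceTriples (N r : ℕ) {e : ℕ} (he : e ≠ 0) :
    ∑' x : {x ∈ congruenceTriples N (e * r) | e ∣ x.2.2.gcd x.1}, dirichletMonomial s α β x =
      (e : ℂ) ^ (-(s + β)) * ∑' x : congruenceTriples N r, dirichletMonomial s α β x := by
  have hinj : Function.Injective fun x : ℕ × ℕ × ℕ => (e * x.1, x.2.1, e * x.2.2) := by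
    rintro ⟨k, m, n⟩ ⟨k', m', n'⟩ h
    simpa [he] using h
  have hmonomial (x : ℕ × ℕ × ℕ) : dirichletMonomial s α β (e * x.1, x.2.1, e * x.2.2) =
      (e : ℂ) ^ (-(s + β)) * dirichletMonomial s α β x := by
    have h := dirichletMonomial_mul s α β e 1 e x.1 x.2.1 x.2.2
    rw [one_mul] at h
    rw [h, neg_add, cpow_add _ _ (Nat.cast_ne_zero.2 he)]
    simp [dirichletMonomial]
  rw [← image_scale_congruenceTriples N r he, tsum_image _ hinj.injOn, ← tsum_mul_left]
  exact tsum_congr fun x => hmonomial x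

theorem tsum_coprime_eq_sum_moebius_mul_tsum {N d : ℕ} (hN : N ≠ 0) (hd : d ≠ 0)
    (hdN : d.Coprime N) (hs : 1 < s.re) (hα : 1 < α.re) (hβ : 1 < β.re) :
    ∑' x : coprimeCongruenceTriples N d, dirichletMonomial s α β x =
      (N : ℂ) ^ (-s) * ∑ r ∈ d.divisors, (μ (d / r) : ℂ) * (((d / r : ℕ) : ℂ) ^ (-(s + β)) *
        ∑' x : congruenceTriples N r, dirichletMonomial s α β x) := by
  have hinj : Function.Injective fun x : ℕ × ℕ × ℕ => (N * x.1, x.2) := by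
    rintro ⟨k, y⟩ ⟨k', y'⟩ h
    simpa [hN] using h
  have hmonomial (x : ℕ × ℕ × ℕ) :
      dirichletMonomial s α β (N * x.1, x.2) = (N : ℂ) ^ (-s) * dirichletMonomial s α β x := by
    simpa [dirichletMonomial] using dirichletMonomial_mul s α β N 1 1 x.1 x.2.1 x.2.2
  rw [← image_mul_left_coprime_congruenceTriples hdN, tsum_image _ hinj.injOn]
  simp only [hmonomial]
  rw [tsum_mul_left, tsum_eq_one_eq_sum_moebius_mul_tsum_dvd hd
    (fun x hx => gcd_dvd_of_mem_congruenceTriples hx) (summable_dirichletMonomial hs hα hβ),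
    ← Nat.sum_div_divisors]
  congr 1
  refine Finset.sum_congr rfl fun r hr => ?_
  have hrd := Nat.dvd_of_mem_divisors hr
  have he : d / r ≠ 0 := (Nat.div_ne_zero_iff_of_dvd hrd).2 ⟨hd, ne_zero_of_dvd_ne_zero hd hrd⟩
  rw [← tsum_dvd_gcd_congruenceTriples N r he, Nat.div_mul_cancel hrd]

end CongruenceTriples

section Evaluation

variable {u z v : ℂ}

theorem one_lt_re_add_of_abs_re_lt (h : |v.re| < z.re - 1) : 1 < (z + v).re := by
  rw [add_re]
  linarith [neg_abs_le v.re]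

theorem one_lt_re_sub_of_abs_re_lt (h : |v.re| < z.re - 1) : 1 < (z - v).re := by
  rw [sub_re]
  linarith [le_abs_self v.re]

theorem one_lt_re_two_mul (hu : 1 / 2 < u.re) : 1 < (2 * u).re := by
  have hre : (2 * u).re = 2 * u.re := by simp
  linarith

theorem lhsTerm_eq_indicator (N d : ℕ) (u z v : ℂ) (x : ℕ × ℕ × ℕ) :
    lhsTerm N d u z v x =
      (coprimeCongruenceTriples N d).indicator (dirichletMonomial (2 * u) (z + v) (z - v))
        (x.1 + 1, x.2.1 + 1, x.2.2 + 1) := by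
  classical
  rw [lhsTerm, Set.indicator_apply]
  refine if_congr Iff.rfl ?_ rfl
  rw [mul_div_assoc, div_cpow_div_mul_cpow (Nat.succ_ne_zero _) (Nat.succ_ne_zero _), one_div,
    ← cpow_neg, sub_neg_eq_add, ← sub_eq_add_neg, dirichletMonomial]

theorem hasSum_lhsTerm (N d : ℕ) (hu : 1 / 2 < u.re) (hzv : |v.re| < z.re - 1) :
    HasSum (lhsTerm N d u z v)
      (∑' x : coprimeCongruenceTriples N d, dirichletMonomial (2 * u) (z + v) (z - v) x) := by
  have hs := one_lt_re_two_mul hu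
  have hα := one_lt_re_add_of_abs_re_lt hzv
  have hβ := one_lt_re_sub_of_abs_re_lt hzv
  have hinj : Function.Injective fun x : ℕ × ℕ × ℕ => (x.1 + 1, x.2.1 + 1, x.2.2 + 1) := by
    rintro ⟨q, m, n⟩ ⟨q', m', n'⟩ h
    simpa using h
  rw [tsum_subtype _ (dirichletMonomial (2 * u) (z + v) (z - v)),
    funext (lhsTerm_eq_indicator N d u z v)]
  refine (hinj.hasSum_iff fun x hx => ?_).2
    ((summable_dirichletMonomial hs hα hβ).indicator _).hasSum
  have hx0 : dirichletMonomial (2 * u) (z + v) (z - v) x = 0 :=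
    Function.notMem_support.1 fun h => hx (support_dirichletMonomial_subset
      (ne_zero_of_one_lt_re hs) (ne_zero_of_one_lt_re hα) (ne_zero_of_one_lt_re hβ) h)
  exact Set.indicator_apply_eq_zero.2 fun _ => hx0

theorem tsum_dvd_mul_tsum_mul_eq_aTerm (N r : ℕ) {a : ℤ} (ha : a ≠ 0) (u : ℂ) (hα : z + v ≠ 0)
    (hβ : z - v ≠ 0) :
    (∑' k : {k : ℕ | (k : ℤ) ∣ a}, (k : ℂ) ^ (-(2 * u))) *
      ∑' y : {y : ℕ × ℕ | (y.1 : ℤ) * y.2 = r + a * N},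
        (y.1.1 : ℂ) ^ (-(z + v)) * (y.1.2 : ℂ) ^ (-(z - v)) = aTerm N u z v r a := by
  rw [tsum_dvd_cpow_neg ha, aTerm]
  split_ifs with h
  · obtain ⟨l, hl⟩ : ∃ l : ℕ, (r : ℤ) + a * N = l := ⟨_, (Int.toNat_of_nonneg (by lia)).symm⟩
    rw [hl, tsum_mul_eq_natCast (by lia), Int.toNat_natCast, Int.cast_natCast]
    ring
  · rw [tsum_mul_eq_of_nonpos (by grind) hα hβ, mul_zero]

theorem hasSum_aTerm {N r : ℕ} (hN : N ≠ 0) (hr : r ≠ 0) (hu : 1 / 2 < u.re)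
    (hzv : |v.re| < z.re - 1) :
    HasSum (aTerm N u z v r)
      (∑' x : congruenceTriples N r, dirichletMonomial (2 * u) (z + v) (z - v) x -
        riemannZeta (2 * u) * tauC v r / (r : ℂ) ^ z) := by
  have hs := one_lt_re_two_mul hu
  have hα := one_lt_re_add_of_abs_re_lt hzv
  have hβ := one_lt_re_sub_of_abs_re_lt hzv
  have hsum := hasSum_tsum_dvd_mul_tsum_eq (Nat.cast_ne_zero.2 hN) r
    (fun y : ℕ × ℕ => (y.1 : ℤ) * y.2) (summable_norm_natCast_cpow_neg hs)
    (summable_norm_cpow_neg_mul_cpow_neg hα hβ)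
  have haTerm (a : ℤ) : aTerm N u z v r a =
      (∑' k : {k : ℕ | (k : ℤ) ∣ a}, (k : ℂ) ^ (-(2 * u))) *
        (∑' y : {y : ℕ × ℕ | (y.1 : ℤ) * y.2 = r + a * N},
          (y.1.1 : ℂ) ^ (-(z + v)) * (y.1.2 : ℂ) ^ (-(z - v))) -
        if a = 0 then riemannZeta (2 * u) * tauC v r / (r : ℂ) ^ z else 0 := by
    rcases eq_or_ne a 0 with rfl | ha
    · rw [tsum_dvd_zero_cpow_neg hs, zero_mul, add_zero, tsum_mul_eq_natCast hr]
      simp [aTerm, mul_div_assoc]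
    · rw [tsum_dvd_mul_tsum_mul_eq_aTerm N r ha u (ne_zero_of_one_lt_re hα)
        (ne_zero_of_one_lt_re hβ), if_neg ha, sub_zero]
  rw [congruenceTriples_eq_setOf_dvd, funext haTerm]
  exact hsum.sub (hasSum_ite_eq 0 _)

theorem lhs_sum_evaluation_general {N d : ℕ} (hN : 0 < N) (hd : 0 < d) (hdN : d.Coprime N)
    (hu : 1 / 2 < u.re) (hzv : |v.re| < z.re - 1) :
    Summable (lhsTerm N d u z v) ∧
    (∀ r ∈ d.divisors, Summable (aTerm N u z v r)) ∧
    ∑' x : ℕ × ℕ × ℕ, lhsTerm N d u z v x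
      = (1 / (N : ℂ) ^ (2 * u)) *
          ∑ r ∈ d.divisors, (μ (d / r) : ℂ) / ((d / r : ℕ) : ℂ) ^ (z + 2 * u - v) *
            (riemannZeta (2 * u) * tauC v r / (r : ℂ) ^ z + ∑' a : ℤ, aTerm N u z v r a) := by
  have hlhs := hasSum_lhsTerm N d hu hzv
  have ha (r : ℕ) (hr : r ∈ d.divisors) :=
    hasSum_aTerm hN.ne' (Nat.pos_of_mem_divisors hr).ne' hu hzv
  refine ⟨hlhs.summable, fun r hr => (ha r hr).summable, ?_⟩
  rw [hlhs.tsum_eq, tsum_coprime_eq_sum_moebius_mul_tsum hN.ne' hd.ne' hdN (one_lt_re_two_mul hu)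
    (one_lt_re_add_of_abs_re_lt hzv) (one_lt_re_sub_of_abs_re_lt hzv), cpow_neg, one_div]
  congr 1
  refine Finset.sum_congr rfl fun r hr => ?_
  rw [(ha r hr).tsum_eq, add_sub_cancel, cpow_neg, add_sub_left_comm, ← add_sub_assoc]
  ring

end Evaluation

/-- Let `gcd(d,N) = 1`, `Re u > 1/2`, `Re z > 1`, `Re v = 0`.  Then (all series converging
absolutely)
`∑_{N ∣ q} q^{-2u} ∑_{mn ≡ d (q), (n,q)=1} (m/n)^{-v} (mn)^{-z}
  = N^{-2u} ∑_{r ∣ d} μ(d/r) (d/r)^{-(z+2u-v)}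
      ( ζ(2u) τ_v(r) r^{-z} + ∑_{a ≠ 0, a ≥ (1-r)/N} τ_v(r+aN) τ_u(|a|) (r+aN)^{-z} |a|^{-u} )`. -/
theorem lhs_sum_evaluation (N d : ℕ) (hN : 0 < N) (hd : 0 < d) (hdN : Nat.gcd d N = 1)
    (u z v : ℂ) (hu : 1 / 2 < u.re) (hz : 1 < z.re) (hv : v.re = 0) :
    Summable (lhsTerm N d u z v) ∧
    (∀ r ∈ d.divisors, Summable (aTerm N u z v r)) ∧
    ∑' x : ℕ × ℕ × ℕ, lhsTerm N d u z v x
      = (1 / ((N : ℂ)) ^ (2 * u)) *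
          ∑ r ∈ d.divisors,
            ((ArithmeticFunction.moebius (d / r) : ℤ) : ℂ) /
                (((d / r : ℕ) : ℂ)) ^ (z + 2 * u - v) *
              (riemannZeta (2 * u) * tauC v r / ((r : ℂ)) ^ z +
                ∑' a : ℤ, aTerm N u z v r a) :=
  lhs_sum_evaluation_general hN hd hdN hu (by rwa [hv, abs_zero, sub_pos])
end

section
/- For every \(\varepsilon>0\) there is a constant \(C_{\varepsilon}>0\) such that for all integers \(k\geq 2\), \(N\geq 1\), \(r\geq 1\) and all real \(t\) (write \(T=3+|t|\), \(n_0=\lfloor (r+1)/N\rfloor+1\)), the absolutely convergent sum \(V_{N,1}(r)=\cosh(\pi t)\,r^{k-it}\sum_{n\geq n_0}\frac{\tau_0(n)\,\tau_{it}(nN-r)}{(nN-r)^{k}}\,\mathcal{H}_k\Bigl(\frac{r}{nN-r}\Bigr)\) satisfies: \(|V_{N,1}(r)|\leq C_{\varepsilon}\,(rkT^2)^{\varepsilon}\,(k+T)\,\frac{r}{N}\) if \(r\geq N/(1+T^2)\), and \(|V_{N,1}(r)|\leq C_{\varepsilon}\,\Bigl(\frac{rT^2}{4(N-r)}\Bigr)^{k}\frac{N^{\varepsilon}}{T}\)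 if \(r< N/(1+T^2)\). -/
open MeasureTheory

/-- The integrand of the Mellin–Barnes integral for `𝓗_k(w)` on the line `Re s = c`:
`τ ↦ Γ(k+it+c+iτ) Γ(k-it+c+iτ) Γ(-(c+iτ)) / Γ(2k+c+iτ) · w^{c+iτ}`. -/
noncomputable def mbIntegrand (k : ℕ) (t c w : ℝ) (τ : ℝ) : ℂ :=
  Complex.Gamma ((k : ℂ) + t * Complex.I + c + τ * Complex.I) *
    Complex.Gamma ((k : ℂ) - t * Complex.I + c + τ * Complex.I) *
    Complex.Gamma (-((c : ℂ) + τ * Complex.I)) /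
    Complex.Gamma (2 * (k : ℂ) + c + τ * Complex.I) *
    Complex.exp (((c : ℂ) + τ * Complex.I) * Real.log w)

/-- `𝓗_k(w) = (1/2π) ∫_ℝ Γ(k+it+c+iτ)Γ(k-it+c+iτ)Γ(-(c+iτ))/Γ(2k+c+iτ) w^{c+iτ} dτ`,
the Mellin–Barnes integral over the vertical line `Re s = c` (for `c ∈ (-k,0)` the value is
independent of `c` and equals the analytic continuation of
`Γ(k+it)Γ(k-it)/Γ(2k) ₂F₁(k+it,k-it,2k;-w)`). -/
noncomputable def Hmb (k : ℕ) (t c w : ℝ) : ℂ :=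
  (1 / (2 * Real.pi) : ℂ) * ∫ τ : ℝ, mbIntegrand k t c w τ

/-- The summand of `V_{N,1}(r)`: for `n ≥ n₀ = ⌊(r+1)/N⌋ + 1`,
`τ₀(n) τ_{it}(nN-r)/(nN-r)^k 𝓗_k(r/(nN-r))`, and `0` otherwise. -/
noncomputable def V1term (k N r : ℕ) (t c : ℝ) (n : ℕ) : ℂ :=
  if (r + 1) / N + 1 ≤ n then
    ((n.divisors.card : ℂ)) * tauC (t * Complex.I) (n * N - r) /
        (((n * N - r : ℕ) : ℂ)) ^ (k : ℂ) *
      Hmb k t c ((r : ℝ) / ((n * N - r : ℕ) : ℝ))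
  else 0

/-- `V_{N,1}(r) = cosh(πt) r^{k-it} ∑_{n ≥ n₀} τ₀(n) τ_{it}(nN-r)/(nN-r)^k 𝓗_k(r/(nN-r))`. -/
noncomputable def V1 (k N r : ℕ) (t c : ℝ) : ℂ :=
  (Real.cosh (Real.pi * t) : ℂ) * ((r : ℂ)) ^ ((k : ℂ) - t * Complex.I) *
    ∑' n : ℕ, V1term k N r t c n

/-!
Write `T = 3 + |t|` and `G(w) = cosh (π t) w ^ k |𝓗_k(w)|`. Moving the line of integration to
`Re s = -k + δ`, `Re s = -k + 1/2` or `Re s = -δ` gives, uniformly in `k`,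

  `G(w) ≪ T ^ (1 + δ) w ^ δ`,  `G(w) ≪ T ^ δ √w`,  `G(w) ≪ T ^ (δ - 1) (T² / 4) ^ k w ^ (k - δ)`.

On these lines `Γ(k + s + it) Γ(k + s - it)` is compared with `Γ(a + i(τ + t)) Γ(a + i(τ - t))`,
where `a = 1/2` or `a = 1`. The reflection formula evaluates the latter, and
`|τ + t| + |τ - t| = 2 max(|t|, |τ|)` shows that it decays like `exp (-π max(|t|, |τ|))`, which
absorbs `cosh (π t)`. The quotient `Γ(-s) / Γ(2k + s)` is bounded through the Beta integral, and on
the third line the recurrence `Γ(z + 1) = z Γ(z)` trades each unit of `k` for a factor `1 + t² / 4`.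

Together the three bounds give `G(w) ≪ T ^ (3δ - 1) max(1, w) ^ δ (T² min(1, w)) ^ (1 + 3δ)`. Take
`w = r / (nN - r)`, so that `min(1, w) ≤ 2r / (nN)`; as there are `≪ m ^ δ` divisors of `m`, the
`n`-th term of the series is `≪ n ^ (-1 - δ)`. If `r < N / (1 + T²)`, the third bound alone gives
the stronger estimate.
-/

section Gamma

open Complex

/-- The modulus `|Γ(a + iy)|` as a function of the real parameters `a` and `y`. -/
noncomputable def absGamma (a y : ℝ) : ℝ := ‖Gamma (a + y * I)‖

lemma absGamma_nonneg (a y : ℝ) : 0 ≤ absGamma a y := norm_nonneg _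

lemma absGamma_pos {a : ℝ} (ha : 0 < a) (y : ℝ) : 0 < absGamma a y :=
  norm_pos_iff.2 (Gamma_ne_zero_of_re_pos (by simpa using ha))

lemma absGamma_neg_right (a y : ℝ) : absGamma a (-y) = absGamma a y := by
  have hconj : (a : ℂ) + (-y : ℝ) * I = (starRingEnd ℂ) (a + y * I) := by simp
  rw [absGamma, hconj, Gamma_conj, norm_conj, absGamma]

lemma absGamma_add_one {a : ℝ} (ha : 0 < a) (y : ℝ) :
    absGamma (a + 1) y = ‖(a + y * I : ℂ)‖ * absGamma a y := by
  have hne : (a + y * I : ℂ) ≠ 0 := fun h => ha.ne' (by simpa using congrArg re h)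
  rw [absGamma, absGamma, ← norm_mul, ← Gamma_add_one _ hne]
  push_cast
  ring_nf

lemma absGamma_le_Gamma {a : ℝ} (ha : 0 < a) (y : ℝ) : absGamma a y ≤ Real.Gamma a := by
  have hre : 0 < (a + y * I : ℂ).re := by simpa using ha
  rw [absGamma, Gamma_eq_integral hre, GammaIntegral, Real.Gamma_eq_integral ha]
  refine norm_integral_le_of_norm_le (Real.GammaIntegral_convergent ha) ?_
  filter_upwards [ae_restrict_mem measurableSet_Ioi] with x (hx : 0 < x)
  rw [norm_mul, norm_cpow_eq_rpow_re_of_pos hx, norm_real, Real.norm_of_nonneg (Real.exp_pos _).le]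
  simp

lemma absGamma_le_Gamma_add_two_div {a : ℝ} (ha : 0 < a) (y : ℝ) :
    absGamma a y ≤ Real.Gamma (a + 2) / (a ^ 2 + y ^ 2) := by
  have hnorm : ‖(a + y * I : ℂ)‖ ≤ ‖((a + 1 : ℝ) + y * I : ℂ)‖ := by
    rw [norm_add_mul_I, norm_add_mul_I]
    gcongr
    linarith
  rw [le_div_iff₀' (by positivity)]
  calc (a ^ 2 + y ^ 2) * absGamma a y
      = ‖(a + y * I : ℂ)‖ * (‖(a + y * I : ℂ)‖ * absGamma a y) := by
        rw [norm_add_mul_I, ← mul_assoc, Real.mul_self_sqrt (by positivity)]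
    _ ≤ ‖((a + 1 : ℝ) + y * I : ℂ)‖ * (‖(a + y * I : ℂ)‖ * absGamma a y) :=
        mul_le_mul_of_nonneg_right hnorm (mul_nonneg (norm_nonneg _) (absGamma_nonneg a y))
    _ = absGamma (a + 1 + 1) y := by
        rw [absGamma_add_one (by positivity), absGamma_add_one ha]
    _ ≤ Real.Gamma (a + 2) := by
        rw [add_assoc, one_add_one_eq_two]
        exact absGamma_le_Gamma (by positivity) y

lemma norm_betaIntegral_le {a b : ℝ} {u v : ℂ} (ha : 0 < a) (hau : a ≤ u.re) (hb : 0 < b)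
    (hbv : b ≤ v.re) : ‖betaIntegral u v‖ ≤ ProbabilityTheory.beta a b := by
  have hint := betaIntegral_convergent (u := a) (v := b) (by simpa using ha) (by simpa using hb)
  rw [ProbabilityTheory.beta_eq_betaIntegralReal a b ha hb, betaIntegral, betaIntegral,
    ← reCLM_apply, ← reCLM.intervalIntegral_comp_comm hint]
  refine intervalIntegral.norm_integral_le_of_norm_le zero_le_one ?_
    ⟨reCLM.integrable_comp hint.1, reCLM.integrable_comp hint.2⟩
  filter_upwards [Measure.ae_ne volume 1] with x hx1 hx
  have hx0 : 0 < x := hx.1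
  have h1x : 0 < 1 - x := sub_pos.2 (lt_of_le_of_ne hx.2 hx1)
  have h1x' : (1 : ℂ) - x = (1 - x : ℝ) := by push_cast; ring
  have hreal : (x : ℂ) ^ ((a : ℂ) - 1) * (1 - (x : ℂ)) ^ ((b : ℂ) - 1) =
      (x ^ (a - 1) * (1 - x) ^ (b - 1) : ℝ) := by
    push_cast [ofReal_cpow hx0.le, ofReal_cpow h1x.le]
    rfl
  rw [hreal, reCLM_apply, ofReal_re, norm_mul, h1x', norm_cpow_eq_rpow_re_of_pos hx0,
    norm_cpow_eq_rpow_re_of_pos h1x, sub_re, sub_re, one_re]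
  exact mul_le_mul
    (Real.rpow_le_rpow_of_exponent_ge hx0 hx.2 (sub_le_sub_right hau 1))
    (Real.rpow_le_rpow_of_exponent_ge h1x (by linarith) (sub_le_sub_right hbv 1))
    (by positivity) (by positivity)

lemma absGamma_div_absGamma_add_le {a a' b : ℝ} (ha : 0 < a) (haa' : a ≤ a') (hb : 0 < b)
    (y : ℝ) : absGamma a' y / absGamma (a' + b) y ≤ Real.Gamma a / Real.Gamma (a + b) := by
  have hre : 0 < (a' + y * I : ℂ).re := by simpa using ha.trans_le haa'
  have hΓb := Real.Gamma_pos_of_pos hb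
  have hbeta : ‖betaIntegral (a' + y * I) b‖ ≤ ProbabilityTheory.beta a b :=
    norm_betaIntegral_le ha (by simpa using haa') hb (by simp)
  have hsum : (a' + y * I + b : ℂ) = ((a' + b : ℝ) : ℂ) + y * I := by push_cast; ring
  rw [betaIntegral_eq_Gamma_mul_div _ _ hre (by simpa using hb), hsum, Gamma_ofReal, norm_div,
    norm_mul, norm_real, Real.norm_of_nonneg hΓb.le, ProbabilityTheory.beta,
    mul_div_right_comm, mul_div_right_comm] at hbeta
  exact le_of_mul_le_mul_right hbeta hΓb

lemma absGamma_half_sq (y : ℝ) : absGamma (1 / 2) y ^ 2 = Real.pi / Real.cosh (Real.pi * y) := by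
  have hreflect := congrArg norm (Gamma_mul_Gamma_one_sub (((1 / 2 : ℝ) : ℂ) + y * I))
  have hone_sub : (1 : ℂ) - (((1 / 2 : ℝ) : ℂ) + y * I) = ((1 / 2 : ℝ) : ℂ) + (-y : ℝ) * I := by
    push_cast; ring
  have hsin : sin (Real.pi * (((1 / 2 : ℝ) : ℂ) + y * I)) = (Real.cosh (Real.pi * y) : ℂ) := by
    have harg : (Real.pi : ℂ) * (((1 / 2 : ℝ) : ℂ) + y * I) =
        ((Real.pi * y : ℝ) : ℂ) * I + Real.pi / 2 := by push_cast; ring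
    rw [harg, sin_add_pi_div_two, cos_mul_I, ofReal_cosh]
  rw [norm_mul, hone_sub, ← absGamma, ← absGamma, absGamma_neg_right, hsin, norm_div, norm_real,
    norm_real, Real.norm_of_nonneg Real.pi_pos.le, Real.norm_of_nonneg (Real.cosh_pos _).le]
    at hreflect
  rw [sq, hreflect]

lemma absGamma_one_sq {y : ℝ} (hy : y ≠ 0) :
    absGamma 1 y ^ 2 = Real.pi * |y| / Real.sinh (Real.pi * |y|) := by
  have hyI : (y : ℂ) * I ≠ 0 := by simp [hy]
  have hreflect := congrArg norm (Gamma_mul_Gamma_one_sub ((y : ℂ) * I))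
  have hone_sub : (1 : ℂ) - y * I = ((1 : ℝ) : ℂ) + (-y : ℝ) * I := by push_cast; ring
  have hsin : ‖sin (Real.pi * (y * I))‖ = Real.sinh (Real.pi * |y|) := by
    rw [← mul_assoc, sin_mul_I, ← ofReal_mul, ← ofReal_sinh, norm_mul, norm_real, norm_I, mul_one,
      Real.norm_eq_abs, Real.abs_sinh, abs_mul, abs_of_pos Real.pi_pos]
  have hstep : absGamma 1 y = |y| * ‖Gamma (y * I)‖ := by
    rw [absGamma, ofReal_one, add_comm, Gamma_add_one _ hyI, norm_mul]
    simp
  rw [norm_mul, hone_sub, ← absGamma, absGamma_neg_right, norm_div, hsin, norm_real,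
    Real.norm_of_nonneg Real.pi_pos.le] at hreflect
  calc absGamma 1 y ^ 2 = |y| * (‖Gamma (y * I)‖ * absGamma 1 y) := by
        rw [sq, ← mul_assoc, ← hstep]
    _ = _ := by rw [hreflect]; ring

lemma exp_abs_le_two_mul_cosh (x : ℝ) : Real.exp |x| ≤ 2 * Real.cosh x := by
  rw [← Real.cosh_abs, Real.cosh_eq]
  linarith [Real.exp_pos (-|x|)]

lemma cosh_le_exp_abs (x : ℝ) : Real.cosh x ≤ Real.exp |x| := by
  rw [← Real.cosh_abs, Real.cosh_eq]
  have : Real.exp (-|x|) ≤ Real.exp |x| := Real.exp_le_exp.2 (neg_le_self (abs_nonneg x))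
  linarith

lemma div_sinh_le {x : ℝ} (hx : 0 < x) : x / Real.sinh x ≤ (1 + 2 * x) * Real.exp (-x) := by
  have hexp : (1 + 2 * x) * Real.exp (-(2 * x)) ≤ 1 := by
    rw [Real.exp_neg, ← div_eq_mul_inv, div_le_one (Real.exp_pos _), add_comm]
    exact Real.add_one_le_exp _
  have hsplit : Real.exp (-x) * Real.sinh x = (1 - Real.exp (-(2 * x))) / 2 := by
    rw [Real.sinh_eq, mul_div_assoc', mul_sub, ← Real.exp_add, ← Real.exp_add]
    ring_nf
    simp
  rw [div_le_iff₀ (Real.sinh_pos_iff.2 hx), mul_assoc, hsplit]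
  linarith

lemma absGamma_half_sq_le (y : ℝ) :
    absGamma (1 / 2) y ^ 2 ≤ 2 * Real.pi * Real.exp (-(Real.pi * |y|)) := by
  have hcosh := exp_abs_le_two_mul_cosh (Real.pi * y)
  rw [abs_mul, abs_of_pos Real.pi_pos] at hcosh
  rw [absGamma_half_sq, div_le_iff₀ (Real.cosh_pos _), Real.exp_neg]
  field_simp
  linarith

lemma absGamma_one_sq_le (y : ℝ) :
    absGamma 1 y ^ 2 ≤ 8 * (1 + |y|) * Real.exp (-(Real.pi * |y|)) := by
  rcases eq_or_ne y 0 with rfl | hy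
  · simp [absGamma]
  · rw [absGamma_one_sq hy]
    refine (div_sinh_le (mul_pos Real.pi_pos (abs_pos.2 hy))).trans ?_
    gcongr
    nlinarith [Real.pi_lt_four, abs_nonneg y]

end Gamma

section VerticalLines

open Complex Filter Set Topology

variable {E : Type*} [NormedAddCommGroup E] [NormedSpace ℂ E] {F : ℂ → E} {a b : ℝ} {g : ℝ → ℝ}

lemma integrable_vertical_line (hF : DifferentiableOn ℂ F (Icc a b ×ℂ univ)) (hg : Integrable g)
    (hFg : ∀ x ∈ Icc a b, ∀ y : ℝ, ‖F (x + y * I)‖ ≤ g y) {x : ℝ} (hx : x ∈ Icc a b) :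
    Integrable fun y : ℝ => F (x + y * I) := by
  have hcont : Continuous fun y : ℝ => F (x + y * I) :=
    hF.continuousOn.comp_continuous (by fun_prop) fun y => by simpa [mem_reProdIm] using hx
  exact hg.mono' hcont.aestronglyMeasurable (.of_forall (hFg x hx))

lemma tendsto_integral_horizontal_segment (hab : a ≤ b)
    (hg : Tendsto g (cocompact ℝ) (𝓝 0))
    (hFg : ∀ x ∈ Icc a b, ∀ y : ℝ, ‖F (x + y * I)‖ ≤ g y) :
    Tendsto (fun y : ℝ => ∫ x in a..b, F (x + y * I)) (cocompact ℝ) (𝓝 0) := by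
  have hbound := hg.mul_const |b - a|
  rw [zero_mul] at hbound
  refine squeeze_zero_norm (fun y => ?_) hbound
  refine intervalIntegral.norm_integral_le_of_norm_le_const fun x hx => ?_
  rw [uIoc_of_le hab] at hx
  exact hFg x (Ioc_subset_Icc_self hx) y

lemma integral_vertical_line_eq (hab : a ≤ b) (hF : DifferentiableOn ℂ F (Icc a b ×ℂ univ))
    (hg : Integrable g) (hg0 : Tendsto g (cocompact ℝ) (𝓝 0))
    (hFg : ∀ x ∈ Icc a b, ∀ y : ℝ, ‖F (x + y * I)‖ ≤ g y) :
    ∫ y : ℝ, F (a + y * I) = ∫ y : ℝ, F (b + y * I) := by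
  have hrect (R : ℝ) :
      (∫ x in a..b, F (x + (-R : ℝ) * I)) - (∫ x in a..b, F (x + R * I)) +
        I • (∫ y in -R..R, F (b + y * I)) - I • (∫ y in -R..R, F (a + y * I)) = 0 :=
    integral_boundary_rect_eq_zero_of_differentiableOn F ⟨a, -R⟩ ⟨b, R⟩
      (hF.mono (reProdIm_subset_iff.2 (prod_mono (uIcc_of_le hab).subset (subset_univ _))))
  have hhor := tendsto_integral_horizontal_segment hab hg0 hFg
  have htop := hhor.mono_left atTop_le_cocompact
  have hbot := (hhor.mono_left atBot_le_cocompact).comp tendsto_neg_atTop_atBot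
  have hver {x : ℝ} (hx : x ∈ Icc a b) := intervalIntegral_tendsto_integral
    (integrable_vertical_line hF hg hFg hx) tendsto_neg_atTop_atBot tendsto_id
  have hlim := ((hbot.sub htop).add ((hver (right_mem_Icc.2 hab)).const_smul I)).sub
    ((hver (left_mem_Icc.2 hab)).const_smul I)
  have hzero := tendsto_nhds_unique (tendsto_const_nhds.congr fun R => (hrect R).symm) hlim
  rw [sub_zero, zero_add, eq_comm, ← smul_sub, smul_eq_zero_iff_right I_ne_zero, sub_eq_zero]
    at hzero
  exact hzero.symm

end VerticalLines

section Kernel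

open Complex Filter Set Topology

/-- The integrand `Γ(k+it+s) Γ(k-it+s) Γ(-s) / Γ(2k+s) · w^s` of `𝓗_k(w)` as a function of the
complex variable `s`; the power is written as an exponential, as in `mbIntegrand`. -/
noncomputable def mellinBarnesKernel (k : ℕ) (t w : ℝ) (s : ℂ) : ℂ :=
  Gamma (k + t * I + s) * Gamma (k - t * I + s) * Gamma (-s) / Gamma (2 * k + s) *
    exp (s * Real.log w)

lemma mbIntegrand_eq_mellinBarnesKernel (k : ℕ) (t c w τ : ℝ) :
    mbIntegrand k t c w τ = mellinBarnesKernel k t w (c + τ * I) := by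
  simp only [mbIntegrand, mellinBarnesKernel, add_assoc]

variable {k : ℕ} {t c w : ℝ}

lemma differentiableAt_mellinBarnesKernel {s : ℂ} (hks : -(k : ℝ) < s.re) (hs : s.re < 0) :
    DifferentiableAt ℂ (mellinBarnesKernel k t w) s := by
  have hGamma {f : ℂ → ℂ} (hf : DifferentiableAt ℂ f s) (hre : 0 < (f s).re) :
      DifferentiableAt ℂ (fun s => Gamma (f s)) s := by
    refine (differentiableAt_Gamma _ fun m hm => ?_).comp s hf
    rw [hm] at hre
    simpa using hre.trans_le (neg_nonpos.2 m.cast_nonneg)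
  have hden : 0 < (2 * k + s : ℂ).re := by simp; linarith
  refine ((((hGamma (by fun_prop) ?_).mul (hGamma (by fun_prop) ?_)).mul
    (hGamma (by fun_prop) ?_)).div (hGamma (by fun_prop) hden)
    (Gamma_ne_zero_of_re_pos hden)).mul (by fun_prop) <;> simp <;> linarith

lemma norm_mbIntegrand (hw : 0 < w) (τ : ℝ) :
    ‖mbIntegrand k t c w τ‖ =
      absGamma (k + c) (τ + t) * absGamma (k + c) (τ - t) *
        (absGamma (-c) τ / absGamma (2 * k + c) τ) * w ^ c := by
  have hexp : ((c + τ * I : ℂ) * Real.log w).re = Real.log w * c := by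
    rw [re_mul_ofReal]
    simp [mul_comm]
  rw [mbIntegrand, norm_mul, norm_div, norm_mul, norm_mul, norm_exp, hexp, ← absGamma_neg_right _ τ,
    mul_div_assoc, Real.rpow_def_of_pos hw]
  simp only [absGamma]
  push_cast
  ring_nf

lemma norm_mbIntegrand_le (hw : 0 < w) (hkc : -(k : ℝ) < c) (hc : c < 0) (τ : ℝ) :
    ‖mbIntegrand k t c w τ‖ ≤
      Real.Gamma (k + c + 2) * Real.Gamma (k + c) * (Real.Gamma (-c) / Real.Gamma (2 * k + c)) *
        w ^ c * ((k + c) ^ 2 + (τ + t) ^ 2)⁻¹ := by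
  have hpos : 0 < k + c := by linarith
  have hratio := absGamma_div_absGamma_add_le (b := 2 * (k + c)) (neg_pos.2 hc) le_rfl
    (by positivity) τ
  rw [show -c + 2 * (k + c) = 2 * k + c by ring] at hratio
  have hbound := absGamma_le_Gamma_add_two_div hpos (τ + t)
  rw [norm_mbIntegrand hw]
  calc absGamma (k + c) (τ + t) * absGamma (k + c) (τ - t) *
        (absGamma (-c) τ / absGamma (2 * k + c) τ) * w ^ c
      ≤ Real.Gamma (k + c + 2) / ((k + c) ^ 2 + (τ + t) ^ 2) * Real.Gamma (k + c) *
        (Real.Gamma (-c) / Real.Gamma (2 * k + c)) * w ^ c := by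
        gcongr
        · exact div_nonneg (absGamma_nonneg _ _) (absGamma_nonneg _ _)
        · exact absGamma_nonneg _ _
        · exact absGamma_le_Gamma hpos _
    _ = _ := by ring

lemma exists_norm_mbIntegrand_le (t : ℝ) (hw : 0 < w) {a b : ℝ} (hka : -(k : ℝ) < a) (hb : b < 0) :
    ∃ M : ℝ, ∀ x ∈ Icc a b, ∀ τ : ℝ,
      ‖mbIntegrand k t x w τ‖ ≤ M * ((k + a) ^ 2 + (τ + t) ^ 2)⁻¹ := by
  have hΓ {f : ℝ → ℝ} (hf : Continuous f) (hpos : ∀ x ∈ Icc a b, 0 < f x) :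
      ContinuousOn (fun x => Real.Gamma (f x)) (Icc a b) :=
    Real.differentiableOn_Gamma_Ioi.continuousOn.comp hf.continuousOn hpos
  have hden : ∀ x ∈ Icc a b, 0 < 2 * k + x := fun x hx => by linarith [hx.1, k.cast_nonneg (α := ℝ)]
  have hcont : ContinuousOn (fun x => Real.Gamma (k + x + 2) * Real.Gamma (k + x) *
      (Real.Gamma (-x) / Real.Gamma (2 * k + x)) * w ^ x) (Icc a b) :=
    (((hΓ (by fun_prop) fun x hx => by linarith [hx.1]).mul
      (hΓ (by fun_prop) fun x hx => by linarith [hx.1])).mul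
      ((hΓ (by fun_prop) fun x hx => by linarith [hx.2]).div (hΓ (by fun_prop) hden)
        fun x hx => (Real.Gamma_pos_of_pos (hden x hx)).ne')).mul
      (Real.continuous_const_rpow hw.ne').continuousOn
  obtain ⟨M, hM⟩ := isCompact_Icc.bddAbove_image hcont
  refine ⟨M, fun x hx τ => ?_⟩
  have hka' : 0 < k + a := by linarith
  have hkx : k + a ≤ k + x := by linarith [hx.1]
  have hΓ1 := Real.Gamma_pos_of_pos (hka'.trans_le hkx)
  have hΓ2 := Real.Gamma_pos_of_pos (add_pos (hka'.trans_le hkx) two_pos)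
  have hΓ3 := Real.Gamma_pos_of_pos (neg_pos.2 (hx.2.trans_lt hb))
  have hΓ4 := Real.Gamma_pos_of_pos (hden x hx)
  refine (norm_mbIntegrand_le hw (by linarith) (by linarith [hx.2]) τ).trans ?_
  have hMx := hM (mem_image_of_mem _ hx)
  refine mul_le_mul hMx (by gcongr) (by positivity) (le_trans (by positivity) hMx)

lemma integrable_inv_sq_add_sq {a : ℝ} (ha : a ≠ 0) (t : ℝ) :
    Integrable fun τ : ℝ => (a ^ 2 + (τ + t) ^ 2)⁻¹ := by
  refine (((integrable_inv_one_add_sq.comp_mul_left' (inv_ne_zero ha)).comp_add_right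
    t).const_mul (a ^ 2)⁻¹).congr (.of_forall fun τ => ?_)
  field_simp

lemma tendsto_inv_sq_add_sq (a t : ℝ) :
    Tendsto (fun τ : ℝ => (a ^ 2 + (τ + t) ^ 2)⁻¹) (cocompact ℝ) (𝓝 0) := by
  refine Tendsto.inv_tendsto_atTop (tendsto_atTop_add_const_left _ _ ?_)
  have hshift := tendsto_norm_cocompact_atTop.comp
    (Homeomorph.addRight t).isClosedEmbedding.tendsto_cocompact
  refine ((tendsto_pow_atTop two_ne_zero).comp hshift).congr fun τ => ?_
  simp

lemma differentiableOn_mellinBarnesKernel {a b : ℝ} (hka : -(k : ℝ) < a) (hb : b < 0) :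
    DifferentiableOn ℂ (mellinBarnesKernel k t w) (Icc a b ×ℂ univ) := fun _ hs =>
  (differentiableAt_mellinBarnesKernel (hka.trans_le hs.1.1)
    (hs.1.2.trans_lt hb)).differentiableWithinAt

lemma integrable_mbIntegrand (hw : 0 < w) (hkc : -(k : ℝ) < c) (hc : c < 0) :
    Integrable (mbIntegrand k t c w) := by
  obtain ⟨M, hM⟩ := exists_norm_mbIntegrand_le t hw hkc hc
  simp only [mbIntegrand_eq_mellinBarnesKernel] at hM
  simpa only [← mbIntegrand_eq_mellinBarnesKernel] using
    integrable_vertical_line (differentiableOn_mellinBarnesKernel hkc hc)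
      ((integrable_inv_sq_add_sq (by linarith : k + c ≠ 0) t).const_mul M) hM
      (left_mem_Icc.2 le_rfl)

lemma Hmb_eq_Hmb (hw : 0 < w) {c' : ℝ} (hkc : -(k : ℝ) < c) (hc : c < 0) (hkc' : -(k : ℝ) < c')
    (hc' : c' < 0) : Hmb k t c w = Hmb k t c' w := by
  wlog hcc' : c ≤ c' generalizing c c'
  · exact (this hkc' hc' hkc hc (le_of_not_ge hcc')).symm
  obtain ⟨M, hM⟩ := exists_norm_mbIntegrand_le t hw hkc hc'
  simp only [mbIntegrand_eq_mellinBarnesKernel] at hM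
  simp only [Hmb, mbIntegrand_eq_mellinBarnesKernel]
  rw [integral_vertical_line_eq hcc' (differentiableOn_mellinBarnesKernel hkc hc')
    ((integrable_inv_sq_add_sq (by linarith : k + c ≠ 0) t).const_mul M)
    (by simpa using (tendsto_inv_sq_add_sq (k + c) t).const_mul M) hM]

end Kernel

section VerticalLineBounds

lemma abs_add_add_abs_sub (t τ : ℝ) : |τ + t| + |τ - t| = 2 * max |t| |τ| := by
  grind

lemma exp_neg_abs_add_mul_exp_neg_abs_sub (t τ : ℝ) :
    Real.exp (-(Real.pi * |τ + t|)) * Real.exp (-(Real.pi * |τ - t|)) =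
      Real.exp (-(Real.pi * max |t| |τ|)) ^ 2 := by
  rw [← Real.exp_add, ← Real.exp_nat_mul]
  congr 1
  push_cast
  linear_combination (-Real.pi) * abs_add_add_abs_sub t τ

lemma absGamma_half_mul_absGamma_half_le (t τ : ℝ) :
    absGamma (1 / 2) (τ + t) * absGamma (1 / 2) (τ - t) ≤
      2 * Real.pi * Real.exp (-(Real.pi * max |t| |τ|)) := by
  rw [← sq_le_sq₀ (mul_nonneg (absGamma_nonneg _ _) (absGamma_nonneg _ _)) (by positivity), mul_pow]
  calc absGamma (1 / 2) (τ + t) ^ 2 * absGamma (1 / 2) (τ - t) ^ 2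
      ≤ 2 * Real.pi * Real.exp (-(Real.pi * |τ + t|)) *
        (2 * Real.pi * Real.exp (-(Real.pi * |τ - t|))) := by
        gcongr <;> exact absGamma_half_sq_le _
    _ = _ := by linear_combination (2 * Real.pi) ^ 2 * exp_neg_abs_add_mul_exp_neg_abs_sub t τ

lemma absGamma_one_mul_absGamma_one_le (t τ : ℝ) :
    absGamma 1 (τ + t) * absGamma 1 (τ - t) ≤
      8 * (1 + |t| + |τ|) * Real.exp (-(Real.pi * max |t| |τ|)) := by
  have hadd : 1 + |τ + t| ≤ 1 + |t| + |τ| := by linarith [abs_add_le τ t]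
  have hsub : 1 + |τ - t| ≤ 1 + |t| + |τ| := by linarith [abs_sub τ t]
  rw [← sq_le_sq₀ (mul_nonneg (absGamma_nonneg _ _) (absGamma_nonneg _ _)) (by positivity), mul_pow]
  calc absGamma 1 (τ + t) ^ 2 * absGamma 1 (τ - t) ^ 2
      ≤ 8 * (1 + |τ + t|) * Real.exp (-(Real.pi * |τ + t|)) *
        (8 * (1 + |τ - t|) * Real.exp (-(Real.pi * |τ - t|))) := by
        gcongr <;> exact absGamma_one_sq_le _
    _ ≤ 8 * (1 + |t| + |τ|) * Real.exp (-(Real.pi * |τ + t|)) *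
        (8 * (1 + |t| + |τ|) * Real.exp (-(Real.pi * |τ - t|))) := by gcongr
    _ = _ := by
        linear_combination (8 * (1 + |t| + |τ|)) ^ 2 * exp_neg_abs_add_mul_exp_neg_abs_sub t τ

lemma cosh_mul_exp_neg_max_le {p : ℝ} (hp : 0 ≤ p) (hpπ : p ≤ Real.pi) (t τ : ℝ) :
    Real.cosh (Real.pi * t) * Real.exp (-(Real.pi * max |t| |τ|)) ≤
      ((1 + |t|) / (1 + |τ|)) ^ p := by
  have hcosh := cosh_le_exp_abs (Real.pi * t)
  rw [abs_mul, abs_of_pos Real.pi_pos] at hcosh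
  refine (mul_le_mul_of_nonneg_right hcosh (Real.exp_pos _).le).trans ?_
  rw [← Real.exp_add]
  rcases le_total |τ| |t| with hle | hle
  · rw [max_eq_left hle, add_neg_cancel, Real.exp_zero]
    exact Real.one_le_rpow ((one_le_div (by positivity)).2 (by linarith)) hp
  · have hexp : Real.exp (-(|τ| - |t|)) ≤ (1 + |t|) / (1 + |τ|) := by
      rw [Real.exp_neg, inv_le_comm₀ (Real.exp_pos _) (by positivity), inv_div,
        div_le_iff₀ (by positivity)]
      nlinarith [Real.add_one_le_exp (|τ| - |t|), abs_nonneg t]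
    calc Real.exp (Real.pi * |t| + -(Real.pi * max |t| |τ|))
        ≤ Real.exp (-(|τ| - |t|) * p) := by
          rw [max_eq_right hle, Real.exp_le_exp]
          nlinarith
      _ = Real.exp (-(|τ| - |t|)) ^ p := Real.exp_mul _ _
      _ ≤ _ := Real.rpow_le_rpow (Real.exp_pos _).le hexp hp

lemma cosh_mul_absGamma_half_mul_absGamma_half_le {p : ℝ} (hp : 0 ≤ p) (hpπ : p ≤ Real.pi)
    (t τ : ℝ) :
    Real.cosh (Real.pi * t) * (absGamma (1 / 2) (τ + t) * absGamma (1 / 2) (τ - t)) ≤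
      2 * Real.pi * ((1 + |t|) / (1 + |τ|)) ^ p :=
  calc Real.cosh (Real.pi * t) * (absGamma (1 / 2) (τ + t) * absGamma (1 / 2) (τ - t))
      ≤ Real.cosh (Real.pi * t) * (2 * Real.pi * Real.exp (-(Real.pi * max |t| |τ|))) :=
        mul_le_mul_of_nonneg_left (absGamma_half_mul_absGamma_half_le t τ) (Real.cosh_pos _).le
    _ = 2 * Real.pi * (Real.cosh (Real.pi * t) * Real.exp (-(Real.pi * max |t| |τ|))) := by ring
    _ ≤ _ := by
        gcongr
        exact cosh_mul_exp_neg_max_le hp hpπ t τ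

lemma cosh_mul_absGamma_one_mul_absGamma_one_le {p : ℝ} (hp : 0 ≤ p) (hpπ : p + 1 ≤ Real.pi)
    (t τ : ℝ) :
    Real.cosh (Real.pi * t) * (absGamma 1 (τ + t) * absGamma 1 (τ - t)) ≤
      16 * (1 + |t|) * ((1 + |t|) / (1 + |τ|)) ^ p := by
  have hsum : (1 + |t| + |τ|) *
      (Real.cosh (Real.pi * t) * Real.exp (-(Real.pi * max |t| |τ|))) ≤
        2 * (1 + |t|) * ((1 + |t|) / (1 + |τ|)) ^ p := by
    rcases le_total |τ| |t| with hle | hle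
    · refine mul_le_mul (by linarith) (cosh_mul_exp_neg_max_le hp (by linarith) t τ)
        (by positivity) (by positivity)
    · calc (1 + |t| + |τ|) * (Real.cosh (Real.pi * t) * Real.exp (-(Real.pi * max |t| |τ|)))
          ≤ 2 * (1 + |τ|) * ((1 + |t|) / (1 + |τ|)) ^ (p + 1) :=
            mul_le_mul (by linarith) (cosh_mul_exp_neg_max_le (by linarith) hpπ t τ)
              (by positivity) (by positivity)
        _ = _ := by
            rw [Real.rpow_add_one (by positivity)]
            field_simp
  calc Real.cosh (Real.pi * t) * (absGamma 1 (τ + t) * absGamma 1 (τ - t))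
      ≤ Real.cosh (Real.pi * t) *
          (8 * (1 + |t| + |τ|) * Real.exp (-(Real.pi * max |t| |τ|))) :=
        mul_le_mul_of_nonneg_left (absGamma_one_mul_absGamma_one_le t τ) (Real.cosh_pos _).le
    _ ≤ _ := by linarith

lemma absGamma_le_mul_absGamma {a b : ℝ} (ha : 0 < a) (hab : a < b) (y : ℝ) :
    absGamma a y ≤ Real.Gamma a / Real.Gamma b * absGamma b y := by
  have hratio := absGamma_div_absGamma_add_le ha le_rfl (sub_pos.2 hab) y
  rwa [add_sub_cancel, div_le_iff₀ (absGamma_pos (ha.trans hab) y)] at hratio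

lemma absGamma_mul_absGamma_le {a b : ℝ} (ha : 0 < a) (hab : a < b) (y z : ℝ) :
    absGamma a y * absGamma a z ≤
      (Real.Gamma a / Real.Gamma b) ^ 2 * (absGamma b y * absGamma b z) :=
  (mul_le_mul (absGamma_le_mul_absGamma ha hab y) (absGamma_le_mul_absGamma ha hab z)
    (absGamma_nonneg _ _)
    ((absGamma_nonneg _ _).trans (absGamma_le_mul_absGamma ha hab y))).trans_eq (by ring)

lemma absGamma_div_absGamma_add_one_le {a : ℝ} (ha : 1 / 2 ≤ a) (y : ℝ) :
    absGamma a y / absGamma (a + 1) y ≤ 3 / (1 + |y|) := by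
  have hpos : 0 < a := by linarith
  have hre := Complex.abs_re_le_norm (a + y * Complex.I)
  have him := Complex.abs_im_le_norm (a + y * Complex.I)
  simp only [Complex.add_re, Complex.ofReal_re, Complex.re_ofReal_mul, Complex.I_re, mul_zero,
    add_zero, abs_of_pos hpos, Complex.add_im, Complex.ofReal_im, Complex.im_ofReal_mul,
    Complex.I_im, mul_one, zero_add] at hre him
  rw [absGamma_add_one hpos, div_mul_cancel_right₀ (absGamma_pos hpos y).ne', inv_eq_one_div,
    div_le_div_iff₀ (hpos.trans_le hre) (by positivity)]
  linarith

variable {k : ℕ} {w p : ℝ}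

lemma cosh_mul_norm_mbIntegrand_neg_add_le {a : ℝ} (ha : 0 < a) (ha2 : a < 1 / 2) (hp : 0 ≤ p)
    (hpπ : p ≤ Real.pi) (hk : 1 ≤ k) (hw : 0 < w) (t τ : ℝ) :
    Real.cosh (Real.pi * t) * ‖mbIntegrand k t (-k + a) w τ‖ ≤
      (Real.Gamma a / Real.Gamma (1 / 2)) ^ 2 * (2 * Real.pi) *
        (Real.Gamma (1 - a) / Real.Gamma (1 + a)) * w ^ (-k + a) *
        ((1 + |t|) / (1 + |τ|)) ^ p := by
  have hk' : (1 : ℝ) ≤ k := mod_cast hk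
  have hratio := absGamma_div_absGamma_add_le (b := 2 * a) (by linarith : 0 < 1 - a)
    (by linarith : 1 - a ≤ k - a) (by positivity) τ
  have hpair := absGamma_mul_absGamma_le ha ha2 (τ + t) (τ - t)
  have hhalf := cosh_mul_absGamma_half_mul_absGamma_half_le hp hpπ t τ
  rw [norm_mbIntegrand hw, show (k : ℝ) + (-k + a) = a by ring,
    show -(-k + a) = k - a by ring, show 2 * k + (-k + a) = k - a + 2 * a by ring]
  rw [show 1 - a + 2 * a = 1 + a by ring] at hratio
  set A := Real.Gamma a / Real.Gamma (1 / 2)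
  set D := Real.Gamma (1 - a) / Real.Gamma (1 + a)
  have hD : 0 ≤ D := (div_nonneg (absGamma_nonneg _ _) (absGamma_nonneg _ _)).trans hratio
  calc Real.cosh (Real.pi * t) * (absGamma a (τ + t) * absGamma a (τ - t) *
        (absGamma (k - a) τ / absGamma (k - a + 2 * a) τ) * w ^ (-k + a))
      ≤ Real.cosh (Real.pi * t) * (A ^ 2 * (absGamma (1 / 2) (τ + t) * absGamma (1 / 2) (τ - t)) *
        D * w ^ (-k + a)) := by
        gcongr
        · exact div_nonneg (absGamma_nonneg _ _) (absGamma_nonneg _ _)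
        · exact mul_nonneg (sq_nonneg _) (mul_nonneg (absGamma_nonneg _ _) (absGamma_nonneg _ _))
    _ = A ^ 2 * D * w ^ (-k + a) * (Real.cosh (Real.pi * t) *
        (absGamma (1 / 2) (τ + t) * absGamma (1 / 2) (τ - t))) := by ring
    _ ≤ A ^ 2 * D * w ^ (-k + a) * (2 * Real.pi * ((1 + |t|) / (1 + |τ|)) ^ p) := by
        gcongr
    _ = _ := by ring

lemma cosh_mul_norm_mbIntegrand_neg_add_half_le (hp : 0 ≤ p) (hpπ : p ≤ Real.pi) (hk : 1 ≤ k)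
    (hw : 0 < w) (t τ : ℝ) :
    Real.cosh (Real.pi * t) * ‖mbIntegrand k t (-k + 1 / 2) w τ‖ ≤
      6 * Real.pi * w ^ (-k + 1 / 2 : ℝ) / (1 + |t|) * ((1 + |t|) / (1 + |τ|)) ^ (p + 1) := by
  have hk' : (1 : ℝ) ≤ k := mod_cast hk
  have hhalf := cosh_mul_absGamma_half_mul_absGamma_half_le hp hpπ t τ
  have hratio := absGamma_div_absGamma_add_one_le (by linarith : 1 / 2 ≤ (k : ℝ) - 1 / 2) τ
  rw [norm_mbIntegrand hw, show (k : ℝ) + (-k + 1 / 2) = 1 / 2 by ring,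
    show -(-(k : ℝ) + 1 / 2) = k - 1 / 2 by ring,
    show 2 * (k : ℝ) + (-k + 1 / 2) = k - 1 / 2 + 1 by ring]
  calc Real.cosh (Real.pi * t) * (absGamma (1 / 2) (τ + t) * absGamma (1 / 2) (τ - t) *
        (absGamma (k - 1 / 2) τ / absGamma (k - 1 / 2 + 1) τ) * w ^ (-k + 1 / 2 : ℝ))
      = Real.cosh (Real.pi * t) * (absGamma (1 / 2) (τ + t) * absGamma (1 / 2) (τ - t)) *
        (absGamma (k - 1 / 2) τ / absGamma (k - 1 / 2 + 1) τ) * w ^ (-k + 1 / 2 : ℝ) := by ring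
    _ ≤ 2 * Real.pi * ((1 + |t|) / (1 + |τ|)) ^ p * (3 / (1 + |τ|)) * w ^ (-k + 1 / 2 : ℝ) := by
        gcongr
        exact div_nonneg (absGamma_nonneg _ _) (absGamma_nonneg _ _)
    _ = _ := by
        rw [Real.rpow_add_one (by positivity)]
        field_simp
        ring

lemma norm_add_mul_I_mul_norm_sub_mul_I_le (a t τ : ℝ) :
    ‖(a + (τ + t : ℝ) * Complex.I : ℂ)‖ * ‖(a + (τ - t : ℝ) * Complex.I : ℂ)‖ ≤
      a ^ 2 + τ ^ 2 + t ^ 2 := by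
  rw [Complex.norm_add_mul_I, Complex.norm_add_mul_I, ← Real.sqrt_mul (by positivity),
    Real.sqrt_le_left (by positivity)]
  nlinarith [sq_nonneg (τ * t)]

lemma mul_add_sq_le_norm_add_mul_I_mul_norm_add_mul_I (a b τ : ℝ) :
    a * b + τ ^ 2 ≤ ‖(a + τ * Complex.I : ℂ)‖ * ‖(b + τ * Complex.I : ℂ)‖ := by
  rw [Complex.norm_add_mul_I, Complex.norm_add_mul_I, ← Real.sqrt_mul (by positivity)]
  exact Real.le_sqrt_of_sq_le (by nlinarith [sq_nonneg ((a - b) * τ)])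

lemma absGamma_natCast_add_mul_le {b : ℝ} (hb : 2 / 3 ≤ b) (t τ : ℝ) (n : ℕ) :
    absGamma (n + b) (τ + t) * absGamma (n + b) (τ - t) * absGamma (b + 1) τ ≤
      (1 + t ^ 2 / 4) ^ n * (absGamma b (τ + t) * absGamma b (τ - t)) *
        absGamma (2 * n + 1 + b) τ := by
  induction n with
  | zero => simp [add_comm]
  | succ n ih =>
    have hfactor : (n + b) ^ 2 + τ ^ 2 + t ^ 2 ≤
        (1 + t ^ 2 / 4) * ((2 * n + 1 + b) * (2 * n + 1 + b + 1) + τ ^ 2) := by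
      have hfour : 4 ≤ (2 * n + 1 + b) * (2 * n + 1 + b + 1) := by nlinarith
      have hsq : (n + b) ^ 2 ≤ (2 * n + 1 + b) * (2 * n + 1 + b + 1) := by nlinarith
      nlinarith [mul_le_mul_of_nonneg_left hfour (sq_nonneg t), mul_nonneg (sq_nonneg t)
        (sq_nonneg τ)]
    have hstep := ((norm_add_mul_I_mul_norm_sub_mul_I_le (n + b) t τ).trans hfactor).trans
      (mul_le_mul_of_nonneg_left (mul_add_sq_le_norm_add_mul_I_mul_norm_add_mul_I (2 * n + 1 + b)
        (2 * n + 1 + b + 1) τ) (by positivity))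
    have hmul := mul_le_mul hstep ih (mul_nonneg (mul_nonneg (absGamma_nonneg _ _)
      (absGamma_nonneg _ _)) (absGamma_nonneg _ _)) (by positivity)
    rw [show ((n + 1 : ℕ) : ℝ) + b = n + b + 1 by push_cast; ring,
      show 2 * ((n + 1 : ℕ) : ℝ) + 1 + b = 2 * n + 1 + b + 1 + 1 by push_cast; ring,
      absGamma_add_one (by positivity), absGamma_add_one (by positivity),
      absGamma_add_one (by positivity : 0 < 2 * (n : ℝ) + 1 + b + 1),
      absGamma_add_one (by positivity : 0 < 2 * (n : ℝ) + 1 + b)]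
    calc _ = _ := by ring
      _ ≤ _ := hmul
      _ = _ := by ring

lemma absGamma_natCast_add_mul_div_le {b : ℝ} (hb : 2 / 3 ≤ b) (hb1 : b < 1) (t τ : ℝ) (n : ℕ) :
    absGamma (n + b) (τ + t) * absGamma (n + b) (τ - t) *
        (absGamma (1 - b) τ / absGamma (2 * n + 1 + b) τ) ≤
      Real.Gamma (1 - b) * Real.Gamma b * (1 + t ^ 2 / 4) ^ n *
        (absGamma 1 (τ + t) * absGamma 1 (τ - t)) * (3 / (1 + |τ|)) := by
  have hb0 : 0 < b := by linarith
  have hpair := absGamma_mul_absGamma_le hb0 hb1 (τ + t) (τ - t)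
  rw [Real.Gamma_one, div_one] at hpair
  have hG := absGamma_pos (by positivity : 0 < 2 * (n : ℝ) + 1 + b) τ
  have hGb := absGamma_pos (by positivity : 0 < b + 1) τ
  have hΓ1b := Real.Gamma_pos_of_pos (sub_pos.2 hb1)
  have hpos := absGamma_nonneg (1 - b) τ
  have hone := mul_nonneg (absGamma_nonneg 1 (τ + t)) (absGamma_nonneg 1 (τ - t))
  have hratio := absGamma_div_absGamma_add_one_le (by linarith : 1 / 2 ≤ b) τ
  calc absGamma (n + b) (τ + t) * absGamma (n + b) (τ - t) *
        (absGamma (1 - b) τ / absGamma (2 * n + 1 + b) τ)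
      ≤ (1 + t ^ 2 / 4) ^ n * (absGamma b (τ + t) * absGamma b (τ - t)) *
        absGamma (2 * n + 1 + b) τ / absGamma (b + 1) τ *
        (absGamma (1 - b) τ / absGamma (2 * n + 1 + b) τ) := by
        gcongr
        exact (le_div_iff₀ hGb).2 (absGamma_natCast_add_mul_le hb t τ n)
    _ = (1 + t ^ 2 / 4) ^ n * (absGamma b (τ + t) * absGamma b (τ - t)) *
        (absGamma (1 - b) τ / absGamma (b + 1) τ) := by field_simp
    _ ≤ (1 + t ^ 2 / 4) ^ n *
        (Real.Gamma b ^ 2 * (absGamma 1 (τ + t) * absGamma 1 (τ - t))) *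
        (Real.Gamma (1 - b) / Real.Gamma b * absGamma b τ / absGamma (b + 1) τ) := by
        gcongr
        exact absGamma_le_mul_absGamma (sub_pos.2 hb1) (by linarith : 1 - b < b) τ
    _ = Real.Gamma (1 - b) * Real.Gamma b * (1 + t ^ 2 / 4) ^ n *
        (absGamma 1 (τ + t) * absGamma 1 (τ - t)) * (absGamma b τ / absGamma (b + 1) τ) := by
        field_simp
    _ ≤ _ := by
        gcongr

lemma cosh_mul_norm_mbIntegrand_neg_le {a : ℝ} (ha : 0 < a) (ha3 : a ≤ 1 / 3) (hp : 0 ≤ p)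
    (hpπ : p + 1 ≤ Real.pi) (hw : 0 < w) (n : ℕ) (t τ : ℝ) :
    Real.cosh (Real.pi * t) * ‖mbIntegrand (n + 1) t (-a) w τ‖ ≤
      48 * (Real.Gamma a * Real.Gamma (1 - a)) * (1 + t ^ 2 / 4) ^ n * w ^ (-a) *
        ((1 + |t|) / (1 + |τ|)) ^ (p + 1) := by
  have hΓ1 := Real.Gamma_pos_of_pos (by linarith : 0 < 1 - a)
  have hone := cosh_mul_absGamma_one_mul_absGamma_one_le hp hpπ t τ
  have hGammas := absGamma_natCast_add_mul_div_le (by linarith : 2 / 3 ≤ 1 - a)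
    (by linarith) t τ n
  rw [sub_sub_cancel] at hGammas
  rw [norm_mbIntegrand hw, show ((n + 1 : ℕ) : ℝ) + -a = n + (1 - a) by push_cast; ring,
    show 2 * ((n + 1 : ℕ) : ℝ) + -a = 2 * n + 1 + (1 - a) by push_cast; ring, neg_neg]
  set Γs := Real.Gamma a * Real.Gamma (1 - a)
  calc _ ≤ Real.cosh (Real.pi * t) * (Γs * (1 + t ^ 2 / 4) ^ n *
        (absGamma 1 (τ + t) * absGamma 1 (τ - t)) * (3 / (1 + |τ|)) * w ^ (-a)) := by gcongr
    _ = Γs * (1 + t ^ 2 / 4) ^ n * (Real.cosh (Real.pi * t) *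
        (absGamma 1 (τ + t) * absGamma 1 (τ - t))) * (3 / (1 + |τ|)) * w ^ (-a) := by ring
    _ ≤ Γs * (1 + t ^ 2 / 4) ^ n * (16 * (1 + |t|) * ((1 + |t|) / (1 + |τ|)) ^ p) *
        (3 / (1 + |τ|)) * w ^ (-a) := by
        gcongr
    _ = _ := by
        rw [Real.rpow_add_one (by positivity)]
        field_simp
        ring

end VerticalLineBounds

section HmbBounds

open Set

variable {k : ℕ} {t c w δ : ℝ}

lemma cosh_mul_norm_Hmb_le {p M : ℝ} (hp : 1 < p)
    (hM : ∀ τ, Real.cosh (Real.pi * t) * ‖mbIntegrand k t c w τ‖ ≤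
      M * ((1 + |t|) / (1 + |τ|)) ^ p) :
    Real.cosh (Real.pi * t) * ‖Hmb k t c w‖ ≤
      (∫ τ : ℝ, (1 + |τ|) ^ (-p)) * (M * (1 + |t|) ^ p) := by
  have hcosh := Real.cosh_pos (Real.pi * t)
  have hint : Integrable fun τ : ℝ => (1 + |τ|) ^ (-p) := by
    simpa only [Real.norm_eq_abs] using
      integrable_one_add_norm (E := ℝ) (μ := volume) (r := p) (by simpa using hp)
  have hpoint (τ : ℝ) : ‖mbIntegrand k t c w τ‖ ≤
      M * (1 + |t|) ^ p / Real.cosh (Real.pi * t) * (1 + |τ|) ^ (-p) := by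
    rw [div_mul_eq_mul_div, le_div_iff₀' hcosh, Real.rpow_neg (by positivity), mul_assoc,
      ← div_eq_mul_inv, ← Real.div_rpow (by positivity) (by positivity)]
    exact hM τ
  have hnorm := norm_integral_le_of_norm_le (hint.const_mul _) (.of_forall hpoint)
  rw [integral_const_mul] at hnorm
  have htwo_pi : ‖(1 / (2 * Real.pi) : ℂ)‖ ≤ 1 := by
    rw [norm_div, norm_mul, Complex.norm_real, Real.norm_of_nonneg Real.pi_pos.le, norm_one,
      Complex.norm_ofNat, div_le_one (by positivity)]
    linarith [Real.pi_gt_three]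
  calc Real.cosh (Real.pi * t) * ‖Hmb k t c w‖
      ≤ Real.cosh (Real.pi * t) * ‖∫ τ, mbIntegrand k t c w τ‖ := by
        rw [Hmb, norm_mul]
        gcongr
        exact mul_le_of_le_one_left (norm_nonneg _) htwo_pi
    _ ≤ Real.cosh (Real.pi * t) * (M * (1 + |t|) ^ p / Real.cosh (Real.pi * t) *
        ∫ τ : ℝ, (1 + |τ|) ^ (-p)) := by gcongr
    _ = _ := by field_simp

lemma cosh_mul_pow_mul_norm_Hmb_le {c' A p : ℝ} (hp : 1 < p) (hw : 0 < w) (hkc : -(k : ℝ) < c)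
    (hc : c < 0) (hkc' : -(k : ℝ) < c') (hc' : c' < 0)
    (hA : ∀ τ, Real.cosh (Real.pi * t) * ‖mbIntegrand k t c' w τ‖ ≤
      A * w ^ c' * ((1 + |t|) / (1 + |τ|)) ^ p) :
    Real.cosh (Real.pi * t) * w ^ k * ‖Hmb k t c w‖ ≤
      (∫ τ : ℝ, (1 + |τ|) ^ (-p)) * A * (1 + |t|) ^ p * w ^ (k + c') := by
  rw [Hmb_eq_Hmb hw hkc hc hkc' hc', mul_right_comm, Real.rpow_add hw, Real.rpow_natCast]
  exact (mul_le_mul_of_nonneg_right (cosh_mul_norm_Hmb_le hp hA) (by positivity)).trans_eq (by ring)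

lemma exists_cosh_mul_pow_mul_norm_Hmb_le_rpow (hδ : 0 < δ) (hδ2 : δ < 1 / 2) :
    ∃ C : ℝ, 0 ≤ C ∧ ∀ (k : ℕ) (t c w : ℝ), 1 ≤ k → 0 < w → -(k : ℝ) < c → c < 0 →
      Real.cosh (Real.pi * t) * w ^ k * ‖Hmb k t c w‖ ≤ C * (3 + |t|) ^ (1 + δ) * w ^ δ := by
  have hΓ := Real.Gamma_pos_of_pos (by linarith : 0 < 1 - δ)
  refine ⟨(∫ τ : ℝ, (1 + |τ|) ^ (-(1 + δ))) * ((Real.Gamma δ / Real.Gamma (1 / 2)) ^ 2 *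
    (2 * Real.pi) * (Real.Gamma (1 - δ) / Real.Gamma (1 + δ))), by positivity,
    fun k t c w hk hw hkc hc => ?_⟩
  have hk' : (1 : ℝ) ≤ k := mod_cast hk
  refine (cosh_mul_pow_mul_norm_Hmb_le (c' := -k + δ) (p := 1 + δ) (by linarith) hw hkc hc
    (by linarith) (by linarith) (cosh_mul_norm_mbIntegrand_neg_add_le hδ hδ2 (by linarith)
      (by linarith [Real.pi_gt_three]) hk hw t)).trans ?_
  rw [add_neg_cancel_left]
  gcongr
  norm_num

lemma exists_cosh_mul_pow_mul_norm_Hmb_le_sqrt (hδ : 0 < δ) (hδ1 : δ ≤ 1) :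
    ∃ C : ℝ, 0 ≤ C ∧ ∀ (k : ℕ) (t c w : ℝ), 1 ≤ k → 0 < w → -(k : ℝ) < c → c < 0 →
      Real.cosh (Real.pi * t) * w ^ k * ‖Hmb k t c w‖ ≤ C * (3 + |t|) ^ δ * √w := by
  refine ⟨(∫ τ : ℝ, (1 + |τ|) ^ (-(δ + 1))) * (6 * Real.pi), by positivity,
    fun k t c w hk hw hkc hc => ?_⟩
  have hk' : (1 : ℝ) ≤ k := mod_cast hk
  refine (cosh_mul_pow_mul_norm_Hmb_le (c' := -k + 1 / 2) (p := δ + 1)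
    (A := 6 * Real.pi / (1 + |t|)) (by linarith) hw hkc hc (by linarith) (by linarith)
    fun τ => (cosh_mul_norm_mbIntegrand_neg_add_half_le hδ.le (by linarith [Real.pi_gt_three])
      hk hw t τ).trans_eq (by ring)).trans ?_
  calc (∫ τ : ℝ, (1 + |τ|) ^ (-(δ + 1))) * (6 * Real.pi / (1 + |t|)) * (1 + |t|) ^ (δ + 1) *
        w ^ (k + (-k + 1 / 2) : ℝ)
      = (∫ τ : ℝ, (1 + |τ|) ^ (-(δ + 1))) * (6 * Real.pi) * (1 + |t|) ^ δ * √w := by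
        rw [add_neg_cancel_left, ← Real.sqrt_eq_rpow, Real.rpow_add_one (by positivity)]
        field_simp
    _ ≤ _ := by
        gcongr
        norm_num

lemma exists_cosh_mul_pow_mul_norm_Hmb_le_pow (hδ : 0 < δ) (hδ3 : δ ≤ 1 / 3) :
    ∃ C : ℝ, 0 ≤ C ∧ ∀ (k : ℕ) (t c w : ℝ), 1 ≤ k → 0 < w → -(k : ℝ) < c → c < 0 →
      Real.cosh (Real.pi * t) * w ^ k * ‖Hmb k t c w‖ ≤
        C * (3 + |t|) ^ (δ - 1) * ((3 + |t|) ^ 2 / 4) ^ k * w ^ (k - δ) := by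
  have hΓ := Real.Gamma_pos_of_pos (by linarith : 0 < 1 - δ)
  refine ⟨(∫ τ : ℝ, (1 + |τ|) ^ (-(δ + 1))) * (48 * (Real.Gamma δ * Real.Gamma (1 - δ))) * 4,
    by positivity, fun k t c w hk hw hkc hc => ?_⟩
  obtain ⟨n, rfl⟩ := Nat.exists_eq_add_of_le' hk
  have ht : 1 + t ^ 2 / 4 ≤ (3 + |t|) ^ 2 / 4 := by nlinarith [sq_abs t, abs_nonneg t]
  refine (cosh_mul_pow_mul_norm_Hmb_le (c' := -δ) (p := δ + 1)
    (A := 48 * (Real.Gamma δ * Real.Gamma (1 - δ)) * (1 + t ^ 2 / 4) ^ n) (by linarith) hw hkc hc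
    (by push_cast; linarith) (by linarith)
    (cosh_mul_norm_mbIntegrand_neg_le hδ hδ3 hδ.le (by linarith [Real.pi_gt_three]) hw n t)).trans
    ?_
  rw [← sub_eq_add_neg]
  calc (∫ τ : ℝ, (1 + |τ|) ^ (-(δ + 1))) * (48 * (Real.Gamma δ * Real.Gamma (1 - δ)) *
        (1 + t ^ 2 / 4) ^ n) * (1 + |t|) ^ (δ + 1) * w ^ ((n + 1 : ℕ) - δ)
      ≤ (∫ τ : ℝ, (1 + |τ|) ^ (-(δ + 1))) * (48 * (Real.Gamma δ * Real.Gamma (1 - δ)) *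
        ((3 + |t|) ^ 2 / 4) ^ n) * (3 + |t|) ^ (δ + 1) * w ^ ((n + 1 : ℕ) - δ) := by
        gcongr
        norm_num
    _ = _ := by
        rw [show δ + 1 = δ - 1 + 2 by ring, Real.rpow_add (by positivity), Real.rpow_two]
        ring

lemma le_mul_rpow_mul_max_rpow_mul_min_rpow {C T G : ℝ} (hC : 0 ≤ C) (hT : 1 ≤ T) (hw : 0 < w)
    (hδ : 0 < δ) (hδ4 : δ ≤ 1 / 4) {k : ℕ} (hk : 2 ≤ k)
    (hrpow : G ≤ C * T ^ (1 + δ) * w ^ δ) (hsqrt : G ≤ C * T ^ δ * √w)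
    (hpow : G ≤ C * T ^ (δ - 1) * (T ^ 2 / 4) ^ k * w ^ (k - δ)) :
    G ≤ C * T ^ (3 * δ - 1) * max 1 w ^ δ * (T ^ 2 * min 1 w) ^ (1 + 3 * δ) := by
  have hT0 : 0 < T := by linarith
  rcases le_total 1 w with hw1 | hw1
  · rw [max_eq_right hw1, min_eq_left hw1, mul_one]
    calc G ≤ C * T ^ (1 + δ) * w ^ δ := hrpow
      _ ≤ C * T ^ (3 * δ - 1 + 2 * (1 + 3 * δ)) * w ^ δ := by
          gcongr ?_ * _
          exact mul_le_mul_of_nonneg_left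
            (Real.rpow_le_rpow_of_exponent_le hT (by linarith)) hC
      _ = _ := by
          rw [Real.rpow_add hT0, Real.rpow_mul hT0.le, Real.rpow_two]
          ring
  rw [max_eq_left hw1, min_eq_right hw1, Real.one_rpow, mul_one]
  rcases le_total 1 (T ^ 2 * w) with hTw | hTw
  · calc G ≤ C * T ^ δ * √w := hsqrt
      _ = C * T ^ (δ - 1) * (T ^ 2 * w) ^ (1 / 2 : ℝ) := by
          rw [← Real.sqrt_eq_rpow, Real.sqrt_mul (sq_nonneg T), Real.sqrt_sq hT0.le,
            Real.rpow_sub_one hT0.ne']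
          field_simp
      _ ≤ _ := by
          gcongr ?_ * ?_
          · exact mul_le_mul_of_nonneg_left
              (Real.rpow_le_rpow_of_exponent_le hT (by linarith)) hC
          · exact Real.rpow_le_rpow_of_exponent_le hTw (by linarith)
  · have hk' : (2 : ℝ) ≤ k := mod_cast hk
    calc G ≤ C * T ^ (δ - 1) * (T ^ 2 / 4) ^ k * w ^ (k - δ) := hpow
      _ ≤ C * T ^ (δ - 1) * (T ^ 2) ^ k * w ^ (k - δ) := by
          gcongr
          linarith [sq_nonneg T]
      _ = C * T ^ (3 * δ - 1) * (T ^ 2 * w) ^ (k - δ) := by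
          rw [Real.mul_rpow (sq_nonneg T) hw.le, Real.rpow_sub (by positivity : 0 < T ^ 2),
            Real.rpow_natCast, ← Real.rpow_two, ← Real.rpow_mul hT0.le,
            show 3 * δ - 1 = δ - 1 + 2 * δ by ring, Real.rpow_add hT0]
          field_simp
      _ ≤ _ := by
          refine mul_le_mul_of_nonneg_left ?_ (by positivity)
          exact Real.rpow_le_rpow_of_exponent_ge (by positivity) hTw (by linarith)

lemma exists_cosh_mul_pow_mul_norm_Hmb_le (hδ : 0 < δ) (hδ4 : δ ≤ 1 / 4) :
    ∃ C : ℝ, 0 < C ∧ ∀ (k : ℕ) (t c w : ℝ), 2 ≤ k → 0 < w → -(k : ℝ) < c → c < 0 →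
      Real.cosh (Real.pi * t) * w ^ k * ‖Hmb k t c w‖ ≤ C * (3 + |t|) ^ (3 * δ - 1) *
        max 1 w ^ δ * ((3 + |t|) ^ 2 * min 1 w) ^ (1 + 3 * δ) ∧
      Real.cosh (Real.pi * t) * w ^ k * ‖Hmb k t c w‖ ≤
        C * (3 + |t|) ^ (δ - 1) * ((3 + |t|) ^ 2 / 4) ^ k * w ^ (k - δ) := by
  obtain ⟨C₁, hC₁, hrpow⟩ := exists_cosh_mul_pow_mul_norm_Hmb_le_rpow hδ (by linarith)
  obtain ⟨C₂, hC₂, hsqrt⟩ := exists_cosh_mul_pow_mul_norm_Hmb_le_sqrt hδ (by linarith)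
  obtain ⟨C₃, hC₃, hpow⟩ := exists_cosh_mul_pow_mul_norm_Hmb_le_pow hδ (by linarith)
  refine ⟨C₁ + C₂ + C₃ + 1, by positivity, fun k t c w hk hw hkc hc => ?_⟩
  have hk1 : 1 ≤ k := by lia
  have hpow' : Real.cosh (Real.pi * t) * w ^ k * ‖Hmb k t c w‖ ≤ (C₁ + C₂ + C₃ + 1) *
      (3 + |t|) ^ (δ - 1) * ((3 + |t|) ^ 2 / 4) ^ k * w ^ (k - δ) := by
    refine (hpow k t c w hk1 hw hkc hc).trans ?_
    gcongr
    linarith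
  refine ⟨le_mul_rpow_mul_max_rpow_mul_min_rpow (by positivity) (by linarith [abs_nonneg t]) hw hδ
    hδ4 hk ((hrpow k t c w hk1 hw hkc hc).trans ?_) ((hsqrt k t c w hk1 hw hkc hc).trans ?_) hpow',
    hpow'⟩ <;>
  · gcongr
    linarith

end HmbBounds

section DivisorBound

lemma natCast_add_one_le_mul_pow {x : ℝ} (hx : 1 < x) (a : ℕ) :
    (a : ℝ) + 1 ≤ (1 + (x - 1)⁻¹) * x ^ a := by
  have hx0 : 0 < x - 1 := sub_pos.2 hx
  have hbernoulli := one_add_mul_sub_le_pow (by linarith : -1 ≤ x) a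
  have hinv : (x - 1)⁻¹ * (x - 1) = 1 := inv_mul_cancel₀ hx0.ne'
  have hmul := mul_le_mul_of_nonneg_left hbernoulli (inv_nonneg.2 hx0.le)
  have hone : (x - 1)⁻¹ * (1 + a * (x - 1)) = (x - 1)⁻¹ + a := by
    linear_combination a * hinv
  linarith [one_le_pow₀ hx.le (n := a), inv_pos.2 hx0]

lemma natCast_add_one_le_pow {x : ℝ} (hx : 2 ≤ x) (a : ℕ) : (a : ℝ) + 1 ≤ x ^ a :=
  calc (a : ℝ) + 1 ≤ 2 ^ a := mod_cast Nat.lt_two_pow_self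
    _ ≤ x ^ a := by gcongr

lemma natCast_rpow_eq_prod_primeFactors {n : ℕ} (hn : n ≠ 0) (δ : ℝ) :
    (n : ℝ) ^ δ = ∏ p ∈ n.primeFactors, ((p : ℝ) ^ δ) ^ n.factorization p := by
  conv_lhs =>
    rw [← Nat.prod_factorization_pow_eq_self hn, Nat.prod_factorization_eq_prod_primeFactors]
  rw [Nat.cast_prod, ← Real.finsetProd_rpow _ _ fun p _ => by positivity]
  refine Finset.prod_congr rfl fun p _ => ?_
  rw [Nat.cast_pow, ← Real.rpow_pow_comm p.cast_nonneg]

lemma exists_card_divisors_le_rpow {δ : ℝ} (hδ : 0 < δ) :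
    ∃ C : ℝ, 0 < C ∧ ∀ n : ℕ, (n.divisors.card : ℝ) ≤ C * (n : ℝ) ^ δ := by
  set K : ℝ := 1 + (2 ^ δ - 1)⁻¹
  have h2δ : (1 : ℝ) < 2 ^ δ := Real.one_lt_rpow one_lt_two hδ
  have hK : 1 ≤ K := le_add_of_nonneg_right (inv_nonneg.2 (sub_pos.2 h2δ).le)
  obtain ⟨P, hP⟩ := exists_nat_gt ((2 : ℝ) ^ δ⁻¹)
  refine ⟨K ^ P, by positivity, fun n => ?_⟩
  rcases eq_or_ne n 0 with rfl | hn
  · simp [hδ.ne']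
  -- A prime `p ≥ 2 ^ δ⁻¹` needs no constant, since `a + 1 ≤ 2 ^ a ≤ p ^ (δ * a)`.
  have hfactor : ∀ p ∈ n.primeFactors, (n.factorization p : ℝ) + 1 ≤
      (if p < P then K else 1) * ((p : ℝ) ^ δ) ^ n.factorization p := by
    intro p hp
    split_ifs with hlt
    · have hp2 : (2 : ℝ) ≤ p := mod_cast (Nat.prime_of_mem_primeFactors hp).two_le
      refine (natCast_add_one_le_mul_pow h2δ _).trans ?_
      gcongr
    · rw [one_mul]
      refine natCast_add_one_le_pow ?_ _
      have hPp : (P : ℝ) ≤ p := mod_cast not_lt.1 hlt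
      exact (Real.rpow_inv_le_iff_of_pos zero_le_two p.cast_nonneg hδ).1 (hP.le.trans hPp)
  have hsmall : ∏ p ∈ n.primeFactors, (if p < P then K else 1) ≤ K ^ P := by
    rw [← Finset.prod_filter, Finset.prod_const]
    refine pow_le_pow_right₀ hK ?_
    calc (n.primeFactors.filter (· < P)).card ≤ (Finset.range P).card :=
          Finset.card_le_card fun p hp => Finset.mem_range.2 (Finset.mem_filter.1 hp).2
      _ = P := Finset.card_range P
  calc (n.divisors.card : ℝ) = ∏ p ∈ n.primeFactors, ((n.factorization p : ℝ) + 1) := by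
        rw [Nat.card_divisors hn]
        push_cast
        rfl
    _ ≤ ∏ p ∈ n.primeFactors, ((if p < P then K else 1) * ((p : ℝ) ^ δ) ^ n.factorization p) :=
        Finset.prod_le_prod (fun p _ => by positivity) hfactor
    _ = (∏ p ∈ n.primeFactors, if p < P then K else 1) * (n : ℝ) ^ δ := by
        rw [Finset.prod_mul_distrib, natCast_rpow_eq_prod_primeFactors hn]
    _ ≤ K ^ P * (n : ℝ) ^ δ := by gcongr

lemma norm_tauC_le_card_divisors {s : ℂ} (hs : s.re = 0) (n : ℕ) :
    ‖tauC s n‖ ≤ n.divisors.card := by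
  refine (norm_sum_le _ _).trans ?_
  rw [Finset.card_eq_sum_ones, Nat.cast_sum]
  refine Finset.sum_le_sum fun d hd => le_of_eq ?_
  have hquot : (0 : ℝ) < d / (n / d : ℕ) := by
    have hd0 := Nat.pos_of_mem_divisors hd
    have hnd := Nat.div_pos (Nat.divisor_le hd) hd0
    positivity
  rw [show (d : ℂ) / (n / d : ℕ) = (d / (n / d : ℕ) : ℝ) by push_cast; rfl,
    Complex.norm_cpow_eq_rpow_re_of_pos hquot, hs, Real.rpow_zero, Nat.cast_one]

end DivisorBound

section RpowBounds

variable {δ r N n y T C G : ℝ}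

lemma max_one_div_sub_le (hr : 1 ≤ r) (hy : r + 1 ≤ y) : max 1 (r / (y - r)) ≤ r :=
  max_le hr (div_le_self (by linarith) (by linarith))

lemma min_one_div_sub_le (hr : 0 < r) (hy : r < y) : min 1 (r / (y - r)) ≤ 2 * r / y := by
  have hy0 : 0 < y := hr.trans hy
  rcases le_total y (2 * r) with h | h
  · exact (min_le_left _ _).trans ((one_le_div hy0).2 h)
  · refine (min_le_right _ _).trans ?_
    rw [div_le_div_iff₀ (sub_pos.2 hy) hy0]
    nlinarith

lemma div_mul_sub_le_div_sub_div (hr : 0 < r) (hrN : r < N) (hn : 1 ≤ n) :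
    r / (n * N - r) ≤ r / (N - r) / n := by
  rw [div_div]
  gcongr
  nlinarith

lemma mul_rpow_mul_div_rpow_le (hδ : 0 ≤ δ) {x : ℝ} (hx : 0 < x) (hn : 0 < n) (hN : 1 ≤ N) :
    (n * N) ^ (2 * δ) * (x / (n * N)) ^ (1 + 3 * δ) ≤ x ^ (3 * δ) * (x / N) * n ^ (-(1 + δ)) := by
  have hN0 : 0 < N := by linarith
  calc (n * N) ^ (2 * δ) * (x / (n * N)) ^ (1 + 3 * δ)
      = x ^ (1 + 3 * δ) * (n * N) ^ (-(1 + δ)) := by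
        rw [Real.div_rpow hx.le (by positivity), show -(1 + δ) = 2 * δ - (1 + 3 * δ) by ring,
          Real.rpow_sub (by positivity)]
        ring
    _ = x ^ (3 * δ) * x * (n ^ (-(1 + δ)) * N ^ (-(1 + δ))) := by
        rw [add_comm 1 (3 * δ), Real.rpow_add_one hx.ne', Real.mul_rpow hn.le hN0.le]
    _ ≤ x ^ (3 * δ) * x * (n ^ (-(1 + δ)) * N ^ (-1 : ℝ)) := by
        gcongr
        linarith
    _ = _ := by
        rw [Real.rpow_neg_one]
        ring

lemma mul_rpow_mul_le_of_le_max_min (hδ : 0 < δ) (hδ3 : δ ≤ 1 / 3) (hC : 0 ≤ C) (hr : 1 ≤ r)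
    (hT : 1 ≤ T) (hN : 1 ≤ N) (hn : 0 < n) (hrn : r + 1 ≤ n * N)
    (hG : G ≤ C * T ^ (3 * δ - 1) * max 1 (r / (n * N - r)) ^ δ *
      (T ^ 2 * min 1 (r / (n * N - r))) ^ (1 + 3 * δ)) :
    (n * N) ^ (2 * δ) * G ≤
      4 * C * (r * T ^ 2) ^ (6 * δ) * T * (r / N) * n ^ (-(1 + δ)) := by
  have hr0 : 0 < r := by linarith
  have hT0 : 0 < T := by linarith
  have hw : 0 < r / (n * N - r) := div_pos hr0 (by linarith)
  have hmax := max_one_div_sub_le hr hrn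
  have hmin := min_one_div_sub_le hr0 (by linarith : r < n * N)
  have hrT : T ^ (3 * δ) * r ^ δ ≤ (r * T ^ 2) ^ (3 * δ) := by
    rw [mul_comm r, Real.mul_rpow (sq_nonneg T) hr0.le]
    gcongr
    · nlinarith
    · linarith
  have htwo : (2 : ℝ) ^ (3 * δ) ≤ 2 := by
    simpa only [Real.rpow_one] using
      Real.rpow_le_rpow_of_exponent_le one_le_two (by linarith : 3 * δ ≤ 1)
  calc (n * N) ^ (2 * δ) * G
      ≤ (n * N) ^ (2 * δ) * (C * T ^ (3 * δ - 1) * r ^ δ *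
          (T ^ 2 * (2 * r / (n * N))) ^ (1 + 3 * δ)) := by
        gcongr
        exact hG.trans (by gcongr)
    _ = C * T⁻¹ * (T ^ (3 * δ) * r ^ δ) *
          ((n * N) ^ (2 * δ) * (2 * (r * T ^ 2) / (n * N)) ^ (1 + 3 * δ)) := by
        rw [Real.rpow_sub_one hT0.ne']
        ring_nf
    _ ≤ C * T⁻¹ * (r * T ^ 2) ^ (3 * δ) *
          ((2 * (r * T ^ 2)) ^ (3 * δ) * (2 * (r * T ^ 2) / N) * n ^ (-(1 + δ))) := by
        gcongr _ * ?_ * ?_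
        exact mul_rpow_mul_div_rpow_le hδ.le (by positivity) hn hN
    _ = 2 ^ (3 * δ) * (2 * C * ((r * T ^ 2) ^ (3 * δ) * (r * T ^ 2) ^ (3 * δ)) * T * (r / N) *
          n ^ (-(1 + δ))) := by
        rw [Real.mul_rpow zero_le_two (by positivity)]
        field_simp
    _ ≤ 2 * (2 * C * ((r * T ^ 2) ^ (3 * δ) * (r * T ^ 2) ^ (3 * δ)) * T * (r / N) *
          n ^ (-(1 + δ))) := by gcongr
    _ = _ := by
        rw [← Real.rpow_add (by positivity)]
        ring_nf

lemma mul_rpow_mul_div_div_rpow_le (hδ : 0 ≤ δ) (hδ4 : δ ≤ 1 / 4) {k : ℕ} (hk : 2 ≤ k)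
    (hr : 1 ≤ r) (hrN : r < N) (hn : 1 ≤ n) :
    (n * N) ^ (2 * δ) * (r / (N - r) / n) ^ (k - δ) ≤
      N ^ (3 * δ) * (r / (N - r)) ^ k * n ^ (-(1 + δ)) := by
  have hk' : (2 : ℝ) ≤ k := mod_cast hk
  have hn0 : 0 < n := by linarith
  have hr0 : 0 < r := by linarith
  have hN0 : 0 < N := hr0.trans hrN
  have hNr : 0 < N - r := sub_pos.2 hrN
  have hinv : (r / (N - r)) ^ (-δ) ≤ N ^ δ := by
    rw [Real.rpow_neg (by positivity), ← Real.inv_rpow (by positivity), inv_div]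
    gcongr
    exact (div_le_self hNr.le hr).trans (by linarith)
  calc (n * N) ^ (2 * δ) * (r / (N - r) / n) ^ (k - δ)
      = N ^ (2 * δ) * (r / (N - r)) ^ k * (r / (N - r)) ^ (-δ) * n ^ (2 * δ - (k - δ)) := by
        rw [Real.mul_rpow hn0.le hN0.le, Real.div_rpow (by positivity) hn0.le,
          Real.rpow_sub hn0 (2 * δ), sub_eq_add_neg (k : ℝ) δ,
          Real.rpow_add (by positivity : 0 < r / (N - r)), Real.rpow_natCast]
        ring
    _ ≤ N ^ (2 * δ) * (r / (N - r)) ^ k * N ^ δ * n ^ (-(1 + δ)) := by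
        gcongr
        linarith
    _ = _ := by
        rw [show 3 * δ = 2 * δ + δ by ring, Real.rpow_add hN0]
        ring

lemma mul_rpow_mul_le_of_le_pow (hδ : 0 < δ) (hδ4 : δ ≤ 1 / 4) {k : ℕ} (hk : 2 ≤ k) (hC : 0 ≤ C)
    (hr : 1 ≤ r) (hT : 1 ≤ T) (hrN : r < N / (1 + T ^ 2)) (hn : 1 ≤ n)
    (hG : G ≤ C * T ^ (δ - 1) * (T ^ 2 / 4) ^ k * (r / (n * N - r)) ^ (k - δ)) :
    (n * N) ^ (2 * δ) * G ≤
      C * (r * T ^ 2 / (4 * (N - r))) ^ k * (N ^ (4 * δ) / T) * n ^ (-(1 + δ)) := by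
  rw [lt_div_iff₀ (by positivity)] at hrN
  have hk' : (2 : ℝ) ≤ k := mod_cast hk
  have hr0 : 0 < r := by linarith
  have hT0 : 0 < T := by linarith
  have hTN : T ≤ N := by nlinarith
  have hrN' : r < N := by nlinarith
  have hN0 : 0 < N := hr0.trans hrN'
  have hw : 0 ≤ r / (n * N - r) := div_nonneg hr0.le (by nlinarith)
  have hNr : 0 < N - r := sub_pos.2 hrN'
  have hkδ : 0 ≤ k - δ := by linarith
  calc (n * N) ^ (2 * δ) * G
      ≤ (n * N) ^ (2 * δ) *
          (C * T ^ (δ - 1) * (T ^ 2 / 4) ^ k * (r / (N - r) / n) ^ (k - δ)) := by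
        gcongr
        refine hG.trans ?_
        gcongr _ * ?_ ^ _
        exact div_mul_sub_le_div_sub_div hr0 hrN' hn
    _ = C * (T ^ δ / T) * (T ^ 2 / 4) ^ k *
          ((n * N) ^ (2 * δ) * (r / (N - r) / n) ^ (k - δ)) := by
        rw [Real.rpow_sub_one hT0.ne']
        ring
    _ ≤ C * (N ^ δ / T) * (T ^ 2 / 4) ^ k *
          (N ^ (3 * δ) * (r / (N - r)) ^ k * n ^ (-(1 + δ))) := by
        gcongr _ * (?_ ^ _ / _) * _ * ?_
        exact mul_rpow_mul_div_div_rpow_le hδ.le hδ4 hk hr hrN' hn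
    _ = _ := by
        rw [show r * T ^ 2 / (4 * (N - r)) = T ^ 2 / 4 * (r / (N - r)) by field_simp, mul_pow,
          show 4 * δ = δ + 3 * δ by ring, Real.rpow_add hN0]
        ring

end RpowBounds

section Summation

variable {δ D K : ℝ} {k N r : ℕ} {t c : ℝ}

lemma cosh_mul_pow_mul_norm_V1term_le (hδ : 0 ≤ δ) (hD : ∀ n : ℕ, n.divisors.card ≤ D * (n : ℝ) ^ δ)
    (hN : 1 ≤ N) {n : ℕ} (hn : (r + 1) / N + 1 ≤ n) :
    Real.cosh (Real.pi * t) * (r : ℝ) ^ k * ‖V1term k N r t c n‖ ≤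
      D ^ 2 * (((n : ℝ) * N) ^ (2 * δ) * (Real.cosh (Real.pi * t) * ((r : ℝ) / (n * N - r)) ^ k *
        ‖Hmb k t c ((r : ℝ) / (n * N - r))‖)) := by
  have hrn : r + 1 < n * N := (Nat.div_lt_iff_lt_mul hN).1 hn
  obtain ⟨m, hm⟩ : ∃ m, n * N = m + r := ⟨n * N - r, by lia⟩
  have hm0 : (0 : ℝ) < m := by
    rw [Nat.cast_pos]
    lia
  have hnN : (n : ℝ) * N = m + r := mod_cast hm
  have hn_le : (n : ℝ) ≤ m + r := by
    rw [← hnN]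
    exact le_mul_of_one_le_right n.cast_nonneg (mod_cast hN)
  have htau := (norm_tauC_le_card_divisors (s := t * Complex.I) (by simp) m).trans (hD m)
  rw [V1term, if_pos hn, hnN, add_sub_cancel_right, hm, Nat.add_sub_cancel, norm_mul, norm_div,
    norm_mul, Complex.cpow_natCast, norm_pow, Complex.norm_natCast, Complex.norm_natCast]
  set G := Real.cosh (Real.pi * t) * ((r : ℝ) / m) ^ k * ‖Hmb k t c (r / m)‖ with hG
  calc Real.cosh (Real.pi * t) * (r : ℝ) ^ k * (n.divisors.card * ‖tauC (t * Complex.I) m‖ /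
        (m : ℝ) ^ k * ‖Hmb k t c (r / m)‖)
      = n.divisors.card * ‖tauC (t * Complex.I) m‖ * G := by
        rw [hG, div_pow]
        ring
    _ ≤ D * (n : ℝ) ^ δ * (D * (m : ℝ) ^ δ) * G := by
        gcongr
        · exact (Nat.cast_nonneg _).trans (hD n)
        · exact hD n
    _ = D ^ 2 * ((n : ℝ) ^ δ * (m : ℝ) ^ δ * G) := by ring
    _ ≤ D ^ 2 * ((m + r : ℝ) ^ δ * (m + r : ℝ) ^ δ * G) := by
        gcongr
        linarith
    _ = _ := by rw [two_mul, Real.rpow_add (by positivity)]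

lemma summable_V1term_and_norm_V1_le_of_forall_le {f : ℕ → ℝ} (hr : 1 ≤ r) (hf : Summable f)
    (hle : ∀ n, Real.cosh (Real.pi * t) * (r : ℝ) ^ k * ‖V1term k N r t c n‖ ≤ f n) :
    Summable (V1term k N r t c) ∧ ‖V1 k N r t c‖ ≤ ∑' n, f n := by
  have hcosh := Real.cosh_pos (Real.pi * t)
  have hfactor : 0 < Real.cosh (Real.pi * t) * (r : ℝ) ^ k := by positivity
  have hweighted := Summable.of_nonneg_of_le (fun n => by positivity) hle hf
  have hnorm := (summable_mul_left_iff hfactor.ne').1 hweighted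
  refine ⟨hnorm.of_norm, ?_⟩
  have hprefactor : ‖(r : ℂ) ^ ((k : ℂ) - t * Complex.I)‖ = (r : ℝ) ^ k := by
    rw [Complex.norm_natCast_cpow_of_pos hr]
    simp
  calc ‖V1 k N r t c‖
      = Real.cosh (Real.pi * t) * (r : ℝ) ^ k * ‖∑' n, V1term k N r t c n‖ := by
        rw [V1, norm_mul, norm_mul, hprefactor, Complex.norm_real, Real.norm_of_nonneg hcosh.le]
    _ ≤ Real.cosh (Real.pi * t) * (r : ℝ) ^ k * ∑' n, ‖V1term k N r t c n‖ := by
        gcongr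
        exact norm_tsum_le_tsum_norm hnorm
    _ = ∑' n, Real.cosh (Real.pi * t) * (r : ℝ) ^ k * ‖V1term k N r t c n‖ := tsum_mul_left.symm
    _ ≤ ∑' n, f n := hweighted.tsum_le_tsum hle hf

lemma summable_V1term_and_norm_V1_le (hδ : 0 < δ) (hD : ∀ n : ℕ, n.divisors.card ≤ D * (n : ℝ) ^ δ)
    (hN : 1 ≤ N) (hr : 1 ≤ r) (hK : 0 ≤ K)
    (hle : ∀ n : ℕ, 1 ≤ n → (r : ℝ) + 1 ≤ n * N →
      ((n : ℝ) * N) ^ (2 * δ) * (Real.cosh (Real.pi * t) * ((r : ℝ) / (n * N - r)) ^ k *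
        ‖Hmb k t c ((r : ℝ) / (n * N - r))‖) ≤ K * (n : ℝ) ^ (-(1 + δ))) :
    Summable (V1term k N r t c) ∧
      ‖V1 k N r t c‖ ≤ D ^ 2 * (∑' n : ℕ, (n : ℝ) ^ (-(1 + δ))) * K := by
  have hsum : Summable fun n : ℕ => (n : ℝ) ^ (-(1 + δ)) :=
    Real.summable_nat_rpow.2 (by linarith)
  rw [mul_right_comm, ← tsum_mul_left]
  refine summable_V1term_and_norm_V1_le_of_forall_le hr (hsum.mul_left (D ^ 2 * K)) fun n => ?_
  by_cases hn : (r + 1) / N + 1 ≤ n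
  · have hrn : r + 1 < n * N := (Nat.div_lt_iff_lt_mul hN).1 hn
    calc _ ≤ _ := cosh_mul_pow_mul_norm_V1term_le hδ.le hD hN hn
      _ ≤ D ^ 2 * (K * (n : ℝ) ^ (-(1 + δ))) := by
          gcongr _ * ?_
          exact hle n (by lia) (mod_cast hrn.le)
      _ = _ := by ring
  · rw [V1term, if_neg hn, norm_zero, mul_zero]
    positivity

lemma div_mul_sub_pos (hr : 1 ≤ r) {n : ℕ} (hrn : (r : ℝ) + 1 ≤ n * N) :
    0 < (r : ℝ) / (n * N - r) :=
  div_pos (Nat.cast_pos.2 hr) (by linarith)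

variable {A T : ℝ}

lemma summable_V1term_and_norm_V1_le_of_max_min (hδ : 0 < δ) (hδ3 : δ ≤ 1 / 3) (hA : 0 ≤ A)
    (hT : 1 ≤ T) (hD : ∀ n : ℕ, n.divisors.card ≤ D * (n : ℝ) ^ δ) (hN : 1 ≤ N) (hr : 1 ≤ r)
    (hH : ∀ w : ℝ, 0 < w → Real.cosh (Real.pi * t) * w ^ k * ‖Hmb k t c w‖ ≤
      A * T ^ (3 * δ - 1) * max 1 w ^ δ * (T ^ 2 * min 1 w) ^ (1 + 3 * δ)) :
    Summable (V1term k N r t c) ∧ ‖V1 k N r t c‖ ≤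
      D ^ 2 * (∑' n : ℕ, (n : ℝ) ^ (-(1 + δ))) * (4 * A * (r * T ^ 2) ^ (6 * δ) * T * (r / N)) :=
  summable_V1term_and_norm_V1_le hδ hD hN hr (by positivity) fun n hn hrn =>
    mul_rpow_mul_le_of_le_max_min hδ hδ3 hA (mod_cast hr) hT (mod_cast hN) (by positivity) hrn
      (hH _ (div_mul_sub_pos hr hrn))

lemma norm_V1_le_of_pow (hδ : 0 < δ) (hδ4 : δ ≤ 1 / 4) (hA : 0 ≤ A) (hT : 1 ≤ T)
    (hD : ∀ n : ℕ, n.divisors.card ≤ D * (n : ℝ) ^ δ) (hk : 2 ≤ k) (hN : 1 ≤ N) (hr : 1 ≤ r)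
    (hrN : r < N / (1 + T ^ 2))
    (hH : ∀ w : ℝ, 0 < w → Real.cosh (Real.pi * t) * w ^ k * ‖Hmb k t c w‖ ≤
      A * T ^ (δ - 1) * (T ^ 2 / 4) ^ k * w ^ (k - δ)) :
    ‖V1 k N r t c‖ ≤ D ^ 2 * (∑' n : ℕ, (n : ℝ) ^ (-(1 + δ))) *
      (A * (r * T ^ 2 / (4 * (N - r))) ^ k * (N ^ (4 * δ) / T)) := by
  have hNr : 0 < (N : ℝ) - r :=
    sub_pos.2 (hrN.trans_le (div_le_self (by positivity) (by nlinarith)))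
  exact (summable_V1term_and_norm_V1_le hδ hD hN hr (by positivity) fun n hn hrn =>
    mul_rpow_mul_le_of_le_pow hδ hδ4 hk hA (mod_cast hr) hT hrN (mod_cast hn)
      (hH _ (div_mul_sub_pos hr hrn))).2

end Summation

theorem V1_bound_general (ε : ℝ) (hε : 0 < ε) :
    ∃ C : ℝ, 0 < C ∧ ∀ (k N r : ℕ) (t c : ℝ), 2 ≤ k → 1 ≤ N → 1 ≤ r →
      -(k : ℝ) < c → c < 0 →
      (∀ w : ℝ, 0 < w → Integrable (mbIntegrand k t c w)) ∧
      Summable (V1term k N r t c) ∧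
      ‖V1 k N r t c‖ ≤ C * ((r : ℝ) * (3 + |t|) ^ 2) ^ ε * (3 + |t|) * ((r : ℝ) / N) ∧
      ((r : ℝ) < (N : ℝ) / (1 + (3 + |t|) ^ 2) →
        ‖V1 k N r t c‖ ≤ C * ((r : ℝ) * (3 + |t|) ^ 2 / (4 * ((N : ℝ) - r))) ^ k *
          ((N : ℝ) ^ ε / (3 + |t|))) := by
  obtain ⟨δ, hδ, hδ4, hδε⟩ : ∃ δ : ℝ, 0 < δ ∧ δ ≤ 1 / 4 ∧ 6 * δ ≤ ε :=
    ⟨min (1 / 4) (ε / 6), by positivity, min_le_left _ _,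
      by linarith [min_le_right (1 / 4) (ε / 6)]⟩
  obtain ⟨A, hA, hH⟩ := exists_cosh_mul_pow_mul_norm_Hmb_le hδ hδ4
  obtain ⟨D, hD, hdiv⟩ := exists_card_divisors_le_rpow hδ
  set Z := ∑' n : ℕ, (n : ℝ) ^ (-(1 + δ))
  have hZ : Z ≤ Z + 1 := (lt_add_one Z).le
  refine ⟨D ^ 2 * (Z + 1) * (4 * A), by positivity, fun k N r t c hk hN hr hkc hc => ?_⟩
  have hN1 : (1 : ℝ) ≤ N := mod_cast hN
  have hr1 : (1 : ℝ) ≤ r := mod_cast hr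
  have hT : 1 ≤ 3 + |t| := by linarith [abs_nonneg t]
  obtain ⟨hsum, hV⟩ := summable_V1term_and_norm_V1_le_of_max_min hδ (by linarith) hA.le hT hdiv
    hN hr fun w hw => (hH k t c w hk hw hkc hc).1
  refine ⟨fun w hw => integrable_mbIntegrand hw hkc hc, hsum, hV.trans ?_, fun hrN => ?_⟩
  · have hbase : 1 ≤ r * (3 + |t|) ^ 2 := one_le_mul_of_one_le_of_one_le hr1 (one_le_pow₀ hT)
    simp only [← mul_assoc]
    gcongr
  · have hNr : 0 < (N : ℝ) - r :=
      sub_pos.2 (hrN.trans_le (div_le_self (by positivity) (by nlinarith)))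
    have hVsmall := norm_V1_le_of_pow hδ hδ4 hA.le hT hdiv hk hN hr hrN
      fun w hw => (hH k t c w hk hw hkc hc).2
    rw [mul_assoc _ (_ ^ k), mul_assoc _ (4 * A), ← mul_assoc (4 * A)]
    refine hVsmall.trans ?_
    gcongr
    · linarith
    · linarith

/-- For every `ε > 0` there is `C_ε > 0` such that for all integers `k ≥ 2`, `N ≥ 1`, `r ≥ 1`,
all real `t` (with `T = 3 + |t|`) and any `c ∈ (-k, 0)`: the Mellin–Barnes integrals converge
absolutely, the sum defining `V_{N,1}(r)` converges absolutely, and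
`|V_{N,1}(r)| ≤ C_ε (rkT²)^ε (k+T) r/N` if `r ≥ N/(1+T²)`, while
`|V_{N,1}(r)| ≤ C_ε (rT²/(4(N-r)))^k N^ε/T` if `r < N/(1+T²)`. -/
theorem V1_bound (ε : ℝ) (hε : 0 < ε) :
    ∃ C : ℝ, 0 < C ∧ ∀ (k N r : ℕ) (t c : ℝ), 2 ≤ k → 1 ≤ N → 1 ≤ r →
      -(k : ℝ) < c → c < 0 →
      (∀ w : ℝ, 0 < w → Integrable (mbIntegrand k t c w)) ∧
      Summable (V1term k N r t c) ∧
      ((N : ℝ) / (1 + (3 + |t|) ^ 2) ≤ (r : ℝ) →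
        ‖V1 k N r t c‖ ≤ C * ((r : ℝ) * k * (3 + |t|) ^ 2) ^ ε * ((k : ℝ) + (3 + |t|)) *
          ((r : ℝ) / N)) ∧
      ((r : ℝ) < (N : ℝ) / (1 + (3 + |t|) ^ 2) →
        ‖V1 k N r t c‖ ≤ C * ((r : ℝ) * (3 + |t|) ^ 2 / (4 * ((N : ℝ) - r))) ^ k *
          ((N : ℝ) ^ ε / (3 + |t|))) := by
  obtain ⟨C, hC, hV⟩ := V1_bound_general ε hε
  refine ⟨C, hC, fun k N r t c hk hN hr hkc hc => ?_⟩
  obtain ⟨hint, hsum, hlarge, hsmall⟩ := hV k N r t c hk hN hr hkc hc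
  have hk1 : (1 : ℝ) ≤ k := mod_cast one_le_two.trans hk
  refine ⟨hint, hsum, fun _ => hlarge.trans ?_, hsmall⟩
  gcongr C * (?_ * _) ^ ε * ?_ * _
  · exact le_mul_of_one_le_right r.cast_nonneg hk1
  · exact le_add_of_nonneg_left k.cast_nonneg
end
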